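/- arXiv:2601.03095 — 6 statements merged into one kernel-verified Lean document; each statement's English description precedes it below -/
import Mathlib

section
/- For every index i with 0 ≤ i ≤ k−2 there exists a real polynomial P_i in 2i+1 variables such that G_i(t) = q(t) · P_i(q(t), q'(t), …, q^{(2i)}(t)) for all t ∈ [0,T). In other words, each G_i is the product of q with a polynomial expression in q and its derivatives of order ≤ 2i on [0,T). -/
open Set

/-!
Put `H i = G i / q` and `c = -1/4`, so that `H 0 = C₀` and `(H (i+1))' = c q (G i)'''` on `[0,T)`.
The point is that `q (G n)'''` has a primitive which is again a polynomial in `q` and its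
derivatives. Both sums below can be integrated by symmetry under `j ↔ n - j`:

* `∑_{j ≤ n+1} H j (H (n+1-j))'` is half the derivative of `∑_{j ≤ n+1} H j H (n+1-j)`;
* `∑_{j ≤ n} G j (G (n-j))'''` is half the derivative of
  `∑_{j ≤ n} (2 G j (G (n-j))'' - (G j)' (G (n-j))')`.

By the recursion and `(H 0)' = 0`, the first sum is `c` times the second one, hence
`∑_{j ≤ n+1} H j H (n+1-j) - c ∑_{j ≤ n} (2 G j (G (n-j))'' - (G j)' (G (n-j))')` is constant
(`quadratic_first_integral`). The terms `j = 0` and `j = n+1` of the first sum contribute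
`2 C₀ H (n+1)`, and everything else involves only `H 0, …, H n`. As `C₀ ≠ 0`, this expresses
`H (n+1)` through earlier terms, and strong induction on the index gives the result, with orders
counted by the predicate `IsJetPoly`.
-/

/-- On `I`, the function `f` is a real polynomial in `q, q', …, q^{(m)}`, all derivatives being
taken within `I`. -/
def IsJetPoly (I : Set ℝ) (q : ℝ → ℝ) (m : ℕ) (f : ℝ → ℝ) : Prop :=
  ∃ P : MvPolynomial (Fin (m + 1)) ℝ, ∀ t ∈ I,
    f t = MvPolynomial.eval (fun j : Fin (m + 1) => iteratedDerivWithin (j : ℕ) q I t) P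

namespace IsJetPoly

variable {I : Set ℝ} {q : ℝ → ℝ} {m n : ℕ} {f g : ℝ → ℝ}

theorem congr (hf : IsJetPoly I q m f) (h : ∀ t ∈ I, g t = f t) : IsJetPoly I q m g := by
  obtain ⟨P, hP⟩ := hf
  exact ⟨P, fun t ht => (h t ht).trans (hP t ht)⟩

theorem const (a : ℝ) : IsJetPoly I q m (fun _ => a) :=
  ⟨MvPolynomial.C a, fun t _ => by simp⟩

theorem base (h : n ≤ m) : IsJetPoly I q m (iteratedDerivWithin n q I) :=
  ⟨MvPolynomial.X ⟨n, by omega⟩, fun t _ => by simp⟩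

theorem add (hf : IsJetPoly I q m f) (hg : IsJetPoly I q m g) :
    IsJetPoly I q m (fun t => f t + g t) := by
  obtain ⟨P, hP⟩ := hf
  obtain ⟨Q, hQ⟩ := hg
  exact ⟨P + Q, fun t ht => by simp [hP t ht, hQ t ht]⟩

theorem mul (hf : IsJetPoly I q m f) (hg : IsJetPoly I q m g) :
    IsJetPoly I q m (fun t => f t * g t) := by
  obtain ⟨P, hP⟩ := hf
  obtain ⟨Q, hQ⟩ := hg
  exact ⟨P * Q, fun t ht => by simp [hP t ht, hQ t ht]⟩

theorem sub (hf : IsJetPoly I q m f) (hg : IsJetPoly I q m g) :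
    IsJetPoly I q m (fun t => f t - g t) := by
  obtain ⟨P, hP⟩ := hf
  obtain ⟨Q, hQ⟩ := hg
  exact ⟨P - Q, fun t ht => by simp [hP t ht, hQ t ht]⟩

theorem sum {ι : Type*} (s : Finset ι) {F : ι → ℝ → ℝ} (h : ∀ i ∈ s, IsJetPoly I q m (F i)) :
    IsJetPoly I q m (fun t => ∑ i ∈ s, F i t) := by
  classical
  induction s using Finset.induction_on with
  | empty => simpa using const (I := I) (q := q) (m := m) 0
  | insert a s ha ih =>
    have := (h a (by simp)).add (ih fun i hi => h i (by simp [hi]))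
    exact this.congr fun t _ => by simp [Finset.sum_insert ha]

theorem mono (hf : IsJetPoly I q m f) (h : m ≤ n) : IsJetPoly I q n f := by
  obtain ⟨P, hP⟩ := hf
  refine ⟨MvPolynomial.rename (Fin.castLE (by omega : m + 1 ≤ n + 1)) P, fun t ht => ?_⟩
  rw [hP t ht, MvPolynomial.eval_rename]
  rfl

end IsJetPoly

theorem hasDerivWithinAt_iteratedDerivWithin {I : Set ℝ} (hI : UniqueDiffOn ℝ I) {N m : ℕ}
    {f : ℝ → ℝ} (hf : ContDiffOn ℝ N f I) (hm : m + 1 ≤ N) {t : ℝ} (ht : t ∈ I) :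
    HasDerivWithinAt (iteratedDerivWithin m f I) (iteratedDerivWithin (m + 1) f I t) I t := by
  rw [iteratedDerivWithin_succ]
  exact (hf.differentiableOn_iteratedDerivWithin (by exact_mod_cast hm) hI t ht).hasDerivWithinAt

theorem IsJetPoly.derivWithin {I : Set ℝ} (hI : UniqueDiffOn ℝ I) {q f : ℝ → ℝ} {N m : ℕ}
    (hq : ContDiffOn ℝ N q I) (hm : m + 1 ≤ N) (hf : IsJetPoly I q m f) :
    IsJetPoly I q (m + 1) (derivWithin f I) := by
  obtain ⟨P, hP⟩ := hf
  have key : ∀ P : MvPolynomial (Fin (m + 1)) ℝ, ∃ g : ℝ → ℝ, IsJetPoly I q (m + 1) g ∧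
      ∀ t ∈ I, HasDerivWithinAt (fun s => MvPolynomial.eval
        (fun j : Fin (m + 1) => iteratedDerivWithin (j : ℕ) q I s) P) (g t) I t := by
    intro P
    induction P using MvPolynomial.induction_on with
    | C a =>
      refine ⟨_, IsJetPoly.const 0, fun t _ => ?_⟩
      simpa using hasDerivWithinAt_const t I a
    | add P Q hP hQ =>
      obtain ⟨g, hg, hPg⟩ := hP
      obtain ⟨h, hh, hQh⟩ := hQ
      refine ⟨_, hg.add hh, fun t ht => ?_⟩
      simpa using (hPg t ht).fun_add (hQh t ht)
    | mul_X P j hP =>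
      obtain ⟨g, hg, hPg⟩ := hP
      have hPj : IsJetPoly I q (m + 1) (fun s => MvPolynomial.eval
          (fun j : Fin (m + 1) => iteratedDerivWithin (j : ℕ) q I s) P) :=
        IsJetPoly.mono (m := m) ⟨P, fun _ _ => rfl⟩ (by omega)
      refine ⟨_, (hg.mul (IsJetPoly.base (n := j) (by omega))).add
        (hPj.mul (IsJetPoly.base (n := j + 1) (by omega))), fun t ht => ?_⟩
      simpa using (hPg t ht).fun_mul
        (hasDerivWithinAt_iteratedDerivWithin hI hq (m := j) (by omega) ht)
  obtain ⟨g, hg, hPg⟩ := key P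
  refine hg.congr fun t ht => ?_
  rw [derivWithin_congr (fun s hs => hP s hs) (hP t ht)]
  exact (hPg t ht).derivWithin (hI t ht)

theorem IsJetPoly.iteratedDerivWithin {I : Set ℝ} (hI : UniqueDiffOn ℝ I) {q f : ℝ → ℝ}
    {N m : ℕ} (hq : ContDiffOn ℝ N q I) (r : ℕ) (hm : m + r ≤ N) (hf : IsJetPoly I q m f) :
    IsJetPoly I q (m + r) (iteratedDerivWithin r f I) := by
  induction r with
  | zero => simpa using hf
  | succ r ih =>
    exact ((ih (by omega)).derivWithin hI hq (by omega)).congr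
      fun t _ => by rw [iteratedDerivWithin_succ]

/-- The conserved quadratic quantity of the recursion `(H (i+1))' = c q (G i)'''`, where
`G i = q H i` and `H 0` is constant; `G'`, `G''`, `G'''` are denoted `G1`, `G2`, `G3`. -/
theorem quadratic_first_integral {I : Set ℝ} (hI : Convex ℝ I) (n : ℕ) (c : ℝ) (q : ℝ → ℝ)
    (H H1 G G1 G2 G3 : ℕ → ℝ → ℝ)
    (hH : ∀ i ≤ n + 1, ∀ t ∈ I, HasDerivWithinAt (H i) (H1 i t) I t)
    (hG : ∀ i ≤ n, ∀ t ∈ I, HasDerivWithinAt (G i) (G1 i t) I t)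
    (hG1 : ∀ i ≤ n, ∀ t ∈ I, HasDerivWithinAt (G1 i) (G2 i t) I t)
    (hG2 : ∀ i ≤ n, ∀ t ∈ I, HasDerivWithinAt (G2 i) (G3 i t) I t)
    (hGH : ∀ i ≤ n, ∀ t ∈ I, G i t = q t * H i t)
    (hH0 : ∀ t ∈ I, H1 0 t = 0)
    (hrec : ∀ i ≤ n, ∀ t ∈ I, H1 (i + 1) t = c * q t * G3 i t) :
    ∃ K : ℝ, ∀ t ∈ I, ∑ p ∈ Finset.HasAntidiagonal.antidiagonal (n + 1), H p.1 t * H p.2 t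
      = c * ∑ p ∈ Finset.HasAntidiagonal.antidiagonal n, (2 * (G p.1 t * G2 p.2 t) - G1 p.1 t * G1 p.2 t)
        + K := by
  set F : ℝ → ℝ := fun t => ∑ p ∈ Finset.HasAntidiagonal.antidiagonal (n + 1), H p.1 t * H p.2 t
      - c * ∑ p ∈ Finset.HasAntidiagonal.antidiagonal n, (2 * (G p.1 t * G2 p.2 t) - G1 p.1 t * G1 p.2 t)
    with hF
  have hF0 : ∀ t ∈ I, HasDerivWithinAt F 0 I t := by
    intro t ht
    have h1 : HasDerivWithinAt (fun t => ∑ p ∈ Finset.HasAntidiagonal.antidiagonal (n + 1), H p.1 t * H p.2 t)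
        (∑ p ∈ Finset.HasAntidiagonal.antidiagonal (n + 1),
          (H1 p.1 t * H p.2 t + H p.1 t * H1 p.2 t)) I t := by
      refine HasDerivWithinAt.fun_sum fun p hp => ?_
      rw [Finset.HasAntidiagonal.mem_antidiagonal] at hp
      exact (hH _ (by omega) t ht).fun_mul (hH _ (by omega) t ht)
    have h2 : HasDerivWithinAt (fun t => ∑ p ∈ Finset.HasAntidiagonal.antidiagonal n,
          (2 * (G p.1 t * G2 p.2 t) - G1 p.1 t * G1 p.2 t))
        (∑ p ∈ Finset.HasAntidiagonal.antidiagonal n, (2 * (G1 p.1 t * G2 p.2 t + G p.1 t * G3 p.2 t)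
          - (G2 p.1 t * G1 p.2 t + G1 p.1 t * G2 p.2 t))) I t := by
      refine HasDerivWithinAt.fun_sum fun p hp => ?_
      rw [Finset.HasAntidiagonal.mem_antidiagonal] at hp
      exact (((hG _ (by omega) t ht).fun_mul (hG2 _ (by omega) t ht)).const_mul 2).fun_sub
        ((hG1 _ (by omega) t ht).fun_mul (hG1 _ (by omega) t ht))
    refine (h1.fun_sub (h2.const_mul c)).congr_deriv ?_
    have e1 : ∑ p ∈ Finset.HasAntidiagonal.antidiagonal (n + 1), H1 p.1 t * H p.2 t
        = ∑ p ∈ Finset.HasAntidiagonal.antidiagonal (n + 1), H p.1 t * H1 p.2 t := by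
      rw [← Finset.Nat.sum_antidiagonal_swap]
      exact Finset.sum_congr rfl fun p _ => mul_comm _ _
    have e2 : ∑ p ∈ Finset.HasAntidiagonal.antidiagonal n, G2 p.1 t * G1 p.2 t
        = ∑ p ∈ Finset.HasAntidiagonal.antidiagonal n, G1 p.1 t * G2 p.2 t := by
      rw [← Finset.Nat.sum_antidiagonal_swap]
      exact Finset.sum_congr rfl fun p _ => mul_comm _ _
    have e3 : ∑ p ∈ Finset.HasAntidiagonal.antidiagonal (n + 1), H p.1 t * H1 p.2 t
        = c * ∑ p ∈ Finset.HasAntidiagonal.antidiagonal n, G p.1 t * G3 p.2 t := by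
      rw [Finset.Nat.sum_antidiagonal_succ', Finset.mul_sum]
      simp only [hH0 t ht, mul_zero, zero_add]
      refine Finset.sum_congr rfl fun p hp => ?_
      rw [Finset.HasAntidiagonal.mem_antidiagonal] at hp
      rw [hrec _ (by omega) t ht, hGH _ (by omega) t ht]
      ring
    simp only [Finset.sum_add_distrib, Finset.sum_sub_distrib, ← Finset.mul_sum]
    rw [e1, e2, e3]
    ring
  rcases I.eq_empty_or_nonempty with rfl | ⟨a, ha⟩
  · exact ⟨0, fun t ht => ht.elim⟩
  refine ⟨F a, fun t ht => ?_⟩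
  have := hI.norm_image_sub_le_of_norm_hasDerivWithin_le (C := 0) hF0 (by simp) ha ht
  have h : F t = F a := by simpa [sub_eq_zero] using this
  rw [← h, hF]
  ring

/-- each `G i` (0 ≤ i ≤ k−2) equals `q` times a polynomial in
`q, q', …, q^{(2i)}` on `[0,T)`. -/
theorem Gi_is_q_times_polynomial
    (T : ℝ) (hT : 0 < T) (k : ℕ) (hk : 3 ≤ k)
    (q : ℝ → ℝ)
    (hq : ContDiffOn ℝ (2 * k - 2 : ℕ) q (Ico (0:ℝ) T))
    (hq0 : ∀ t ∈ Ico (0:ℝ) T, q t ≠ 0)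
    (C₀ : ℝ) (hC₀ : C₀ ≠ 0)
    (G : ℕ → ℝ → ℝ)
    (hGreg : ∀ i ≤ k - 2, ContDiffOn ℝ (2 * k - 2 * i - 2 : ℕ) (G i) (Ico (0:ℝ) T))
    (hG0 : ∀ t ∈ Ico (0:ℝ) T, G 0 t = C₀ * q t)
    (hGrec : ∀ i, 1 ≤ i → i ≤ k - 2 → ∀ t ∈ Ico (0:ℝ) T,
      derivWithin (fun s => G i s / q s) (Ico (0:ℝ) T) t
        = -(1/4) * q t * iteratedDerivWithin 3 (G (i - 1)) (Ico (0:ℝ) T) t) :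
    ∀ i ≤ k - 2, ∃ P : MvPolynomial (Fin (2 * i + 1)) ℝ,
      ∀ t ∈ Ico (0:ℝ) T,
        G i t = q t *
          MvPolynomial.eval (fun j : Fin (2 * i + 1) => iteratedDerivWithin (j : ℕ) q (Ico (0:ℝ) T) t) P := by
  
  set I := Ico (0:ℝ) T with hIdef
  have hI : UniqueDiffOn ℝ I := uniqueDiffOn_Ico 0 T
  set H : ℕ → ℝ → ℝ := fun i s => G i s / q s with hHdef
  have hGH : ∀ i, ∀ t ∈ I, G i t = q t * H i t := fun i t ht => by
    have := hq0 t ht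
    simp only [hHdef]
    field_simp
  have hH0 : ∀ t ∈ I, H 0 t = C₀ := fun t ht => by
    have := hq0 t ht
    simp only [hHdef, hG0 t ht]
    field_simp
  have hHd : ∀ i ≤ k - 2, ∀ t ∈ I, HasDerivWithinAt (H i) (derivWithin (H i) I t) I t := by
    intro i hi t ht
    have h1 : DifferentiableWithinAt ℝ (G i) I t :=
      (hGreg i hi).differentiableOn (by norm_cast; omega) t ht
    have h2 : DifferentiableWithinAt ℝ q I t := hq.differentiableOn (by norm_cast; omega) t ht
    exact (h1.fun_div h2 (hq0 t ht)).hasDerivWithinAt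
  have main : ∀ i ≤ k - 2, IsJetPoly I q (2 * i) (H i) := by
    intro i
    induction i using Nat.strong_induction_on with
    | _ i ih =>
    intro hi
    rcases i with _ | n
    · exact (IsJetPoly.const C₀).congr hH0
    have hJG : ∀ j ≤ n, IsJetPoly I q (2 * j) (G j) := fun j hj =>
      ((IsJetPoly.base (n := 0) (by omega)).mul (ih j (by omega) (by omega))).congr
        fun t ht => by simpa using hGH j t ht
    obtain ⟨K, hK⟩ := quadratic_first_integral (convex_Ico 0 T) n (-(1/4)) q H
      (fun i => derivWithin (H i) I) G (fun i => iteratedDerivWithin 1 (G i) I)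
      (fun i => iteratedDerivWithin 2 (G i) I) (fun i => iteratedDerivWithin 3 (G i) I)
      (fun i hin => hHd i (by omega))
      (fun i hin t ht => by
        have h := hasDerivWithinAt_iteratedDerivWithin hI (hGreg i (by omega)) (m := 0)
          (by omega) ht
        rwa [iteratedDerivWithin_zero] at h)
      (fun i hin t ht => hasDerivWithinAt_iteratedDerivWithin hI (hGreg i (by omega)) (by omega) ht)
      (fun i hin t ht => hasDerivWithinAt_iteratedDerivWithin hI (hGreg i (by omega)) (by omega) ht)
      (fun i _ => hGH i)
      (fun t ht => by
        rw [derivWithin_congr hH0 (hH0 t ht)]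
        simp)
      (fun i hin t ht => by simpa using hGrec (i + 1) (by omega) (by omega) t ht)
    have hJ1 : IsJetPoly I q (2 * (n + 1)) (fun t => ∑ p ∈ Finset.HasAntidiagonal.antidiagonal n,
        (2 * (G p.1 t * iteratedDerivWithin 2 (G p.2) I t)
          - iteratedDerivWithin 1 (G p.1) I t * iteratedDerivWithin 1 (G p.2) I t)) := by
      refine IsJetPoly.sum _ fun p hp => ?_
      rw [Finset.HasAntidiagonal.mem_antidiagonal] at hp
      have a0 := (hJG p.1 (by omega)).mono (n := 2 * (n + 1)) (by omega)
      have a1 := ((hJG p.1 (by omega)).iteratedDerivWithin hI hq 1 (by omega)).mono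
        (n := 2 * (n + 1)) (by omega)
      have b1 := ((hJG p.2 (by omega)).iteratedDerivWithin hI hq 1 (by omega)).mono
        (n := 2 * (n + 1)) (by omega)
      have b2 := ((hJG p.2 (by omega)).iteratedDerivWithin hI hq 2 (by omega)).mono
        (n := 2 * (n + 1)) (by omega)
      exact ((IsJetPoly.const 2).mul (a0.mul b2)).sub (a1.mul b1)
    -- Away from `(0, n)`, both factors of `H p.1 * H (p.2 + 1)` have index at most `n`.
    have hJ2 : IsJetPoly I q (2 * (n + 1))
        (fun t => ∑ p ∈ (Finset.HasAntidiagonal.antidiagonal n).erase (0, n),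
        H p.1 t * H (p.2 + 1) t) := by
      refine IsJetPoly.sum _ fun p hp => ?_
      rw [Finset.mem_erase, Finset.HasAntidiagonal.mem_antidiagonal] at hp
      obtain ⟨hne, hp⟩ := hp
      have hp1 : p.1 ≠ 0 := fun h0 => hne (Prod.ext h0 (by simp only; omega))
      exact ((ih p.1 (by omega) (by omega)).mono (by omega)).mul
        ((ih (p.2 + 1) (by omega) (by omega)).mono (by omega))
    refine ((IsJetPoly.const (2 * C₀)⁻¹).mul
      ((((IsJetPoly.const (-(1/4))).mul hJ1).add (IsJetPoly.const K)).sub hJ2)).congr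
      fun t ht => ?_
    have e := hK t ht
    rw [Finset.Nat.sum_antidiagonal_succ',
      ← Finset.add_sum_erase _ _ (show (0, n) ∈ Finset.HasAntidiagonal.antidiagonal n by simp)] at e
    simp only [hH0 t ht] at e
    rw [← e]
    field_simp
    ring
  intro i hi
  obtain ⟨P, hP⟩ := main i hi
  exact ⟨P, fun t ht => by rw [hGH i t ht, hP t ht]⟩
end

section
/- For every C₀ ∈ ℝ there exist real-valued functions α_i, β_i, γ_i (0 ≤ i ≤ k−2) on ℝ such that: α₀(t) = C₀·q(t) on [0,T); each α_i is of class C^{2k−2i−2} on [0,T), each β_i is of class C^{2k−2i−3} on [0,T), and each γ_i is of class C^{2k−2i−4} on [0,T); the system (S) holds on [0,T); and for every dimension n ≥ 1, every ξ ∈ ℝ^n, and every function w : ℝ → ℂ that is twice differentiable on [0,T) and satisfies the Liouville equation w''(t) = −(‖ξ‖²/q(t)²)·w(t) on [0,T), the map t ↦ 𝓔_k(ξ,t) is differentiable on [0,T) with derivative equal to β_{k−2}'(t)·‖ξ‖²·Re(conj(w(t))·w'(t)) for every t ∈ [0,T). -/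
/-!
The first two equations of the system say `β = α' - 2 α q'/q` and `(α/q)' = -γ_{i-1}'/(2q)`, so it
can be solved recursively: `α₀ = C₀ q`, then `β_i` is read off from the first equation, `γ_i` from
the third, and `α_{i+1} = q · ∫₀ᵗ -γ_i'/(2q)`. Each round costs two derivatives (`β` and `γ` lose
one each, and the derivative of `γ` is integrated back), which gives the regularity classes.

With `P = |w'|²`, `Q = |w|²`, `R = Re(w̄ w')`, the Liouville equation gives `P' = -2(‖ξ‖²/q²)R`,
`Q' = 2R` and `R' = P - (‖ξ‖²/q²)Q`. Differentiating the form, the `Q` terms cancel by the first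
equation, the `P` terms by the second one, and the `R` terms telescope by the third one, except for
`β_{k-2}' ‖ξ‖² R`.
-/

open Set

/-- The quadratic form 𝓔_k(ξ,t) of the paper, for `w : ℝ → ℂ` and `ξ ∈ ℝⁿ`. -/
noncomputable def quadFormE (T : ℝ) (k : ℕ) (q : ℝ → ℝ) (α β γ : ℕ → ℝ → ℝ)
    {n : ℕ} (ξ : EuclideanSpace ℝ (Fin n)) (w : ℝ → ℂ) (t : ℝ) : ℝ :=
  (∑ i ∈ Finset.range (k - 1),
      α i t * ‖ξ‖ ^ (2 * k - 2 * i - 2) *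
        (‖derivWithin w (Ico (0:ℝ) T) t‖ ^ 2 + ‖ξ‖ ^ 2 * ‖w t‖ ^ 2 / q t ^ 2))
  + (∑ i ∈ Finset.range (k - 1),
      β i t * ‖ξ‖ ^ (2 * k - 2 * i - 2) *
        ((starRingEnd ℂ) (w t) * derivWithin w (Ico (0:ℝ) T) t).re)
  + (∑ i ∈ Finset.range (k - 2),
      γ i t * ‖ξ‖ ^ (2 * k - 2 * i - 4) * ‖derivWithin w (Ico (0:ℝ) T) t‖ ^ 2)

/-- `β` as determined by `α` through `(α/q²)' = β/q²`. -/
noncomputable def betaOf (T : ℝ) (q a : ℝ → ℝ) (s : ℝ) : ℝ :=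
  derivWithin a (Ico (0:ℝ) T) s - 2 * a s * derivWithin q (Ico (0:ℝ) T) s / q s

/-- `γ` as determined by `α` through `β' = 2γ/q²`. -/
noncomputable def gammaOf (T : ℝ) (q a : ℝ → ℝ) (s : ℝ) : ℝ :=
  derivWithin (betaOf T q a) (Ico (0:ℝ) T) s * q s ^ 2 / 2

/-- A primitive of `g` on `[0,T)` vanishing at `0`; `g` is extended to negative arguments by the
constant `g 0`, so that one-sided derivatives at `0` need no separate treatment. -/
noncomputable def primitiveOf (g : ℝ → ℝ) (s : ℝ) : ℝ := ∫ x in (0:ℝ)..s, g (max 0 x)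

/-- The coefficients `α_i`: `α₀ = C₀ q` and `α_{i+1} = q ∫₀ᵗ -γ_i'/(2q)`. -/
noncomputable def alphaSeq (T : ℝ) (q : ℝ → ℝ) (C₀ : ℝ) : ℕ → ℝ → ℝ
  | 0 => fun s => C₀ * q s
  | i + 1 => fun s => q s * primitiveOf
      (fun x => -(derivWithin (gammaOf T q (alphaSeq T q C₀ i)) (Ico (0:ℝ) T) x) / (2 * q x)) s

lemma hasDerivWithinAt_primitiveOf {T : ℝ} {g : ℝ → ℝ} (hg : ContinuousOn g (Ico (0:ℝ) T))
    {t : ℝ} (ht : t ∈ Ico (0:ℝ) T) :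
    HasDerivWithinAt (primitiveOf g) (g t) (Ico (0:ℝ) T) t := by
  have hT : 0 < T := ht.1.trans_lt ht.2
  have hc : ContinuousOn (fun x => g (max 0 x)) (Iio T) :=
    hg.comp (by fun_prop) fun x hx => ⟨le_max_left _ _, max_lt hT hx⟩
  have hnt : Iio T ∈ nhds t := Iio_mem_nhds ht.2
  have h := intervalIntegral.integral_hasDerivAt_right (a := 0) (b := t)
    (f := fun x => g (max 0 x))
    (ContinuousOn.intervalIntegrable (hc.mono fun x hx => by
      rw [uIcc_of_le ht.1] at hx
      exact hx.2.trans_lt ht.2))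
    (hc.stronglyMeasurableAtFilter isOpen_Iio t ht.2) (hc.continuousAt hnt)
  rw [max_eq_right ht.1] at h
  exact h.hasDerivWithinAt

lemma contDiffOn_primitiveOf {T : ℝ} {g : ℝ → ℝ} {m : ℕ}
    (hg : ContDiffOn ℝ m g (Ico (0:ℝ) T)) :
    ContDiffOn ℝ (m + 1 : ℕ) (primitiveOf g) (Ico (0:ℝ) T) := by
  have hu := uniqueDiffOn_Ico (0:ℝ) T
  have hd := fun t ht => hasDerivWithinAt_primitiveOf hg.continuousOn (t := t) ht
  push_cast
  rw [contDiffOn_succ_iff_derivWithin hu]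
  exact ⟨fun t ht => (hd t ht).differentiableWithinAt, by simp,
    hg.congr fun t ht => (hd t ht).derivWithin (hu t ht)⟩

lemma contDiffOn_derivWithin_Ico {T : ℝ} {f : ℝ → ℝ} {m : ℕ}
    (hf : ContDiffOn ℝ (m + 1 : ℕ) f (Ico (0:ℝ) T)) :
    ContDiffOn ℝ m (derivWithin f (Ico (0:ℝ) T)) (Ico (0:ℝ) T) :=
  hf.derivWithin (uniqueDiffOn_Ico _ _) (by norm_cast)

lemma contDiffOn_of_nat_le {s : Set ℝ} {f : ℝ → ℝ} {m n : ℕ} (hf : ContDiffOn ℝ n f s)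
    (h : m ≤ n) : ContDiffOn ℝ m f s :=
  hf.of_le (by exact_mod_cast h)

lemma contDiffOn_betaOf {T : ℝ} {q a : ℝ → ℝ} {m : ℕ}
    (hq : ContDiffOn ℝ (m + 1 : ℕ) q (Ico (0:ℝ) T)) (hq0 : ∀ t ∈ Ico (0:ℝ) T, q t ≠ 0)
    (ha : ContDiffOn ℝ (m + 1 : ℕ) a (Ico (0:ℝ) T)) :
    ContDiffOn ℝ m (betaOf T q a) (Ico (0:ℝ) T) :=
  (contDiffOn_derivWithin_Ico ha).sub
    (((contDiffOn_const.mul (contDiffOn_of_nat_le ha m.le_succ)).mul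
      (contDiffOn_derivWithin_Ico hq)).div (contDiffOn_of_nat_le hq m.le_succ) hq0)

lemma contDiffOn_gammaOf {T : ℝ} {q a : ℝ → ℝ} {m : ℕ}
    (hq : ContDiffOn ℝ (m + 2 : ℕ) q (Ico (0:ℝ) T)) (hq0 : ∀ t ∈ Ico (0:ℝ) T, q t ≠ 0)
    (ha : ContDiffOn ℝ (m + 2 : ℕ) a (Ico (0:ℝ) T)) :
    ContDiffOn ℝ m (gammaOf T q a) (Ico (0:ℝ) T) :=
  ((contDiffOn_derivWithin_Ico (contDiffOn_betaOf (m := m + 1) hq hq0 ha)).mul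
    ((contDiffOn_of_nat_le hq (by omega)).pow 2)).div_const 2

lemma contDiffOn_alphaSeq_integrand {T : ℝ} {q a : ℝ → ℝ} {m : ℕ}
    (hq : ContDiffOn ℝ (m + 3 : ℕ) q (Ico (0:ℝ) T)) (hq0 : ∀ t ∈ Ico (0:ℝ) T, q t ≠ 0)
    (ha : ContDiffOn ℝ (m + 3 : ℕ) a (Ico (0:ℝ) T)) :
    ContDiffOn ℝ m (fun x => -(derivWithin (gammaOf T q a) (Ico (0:ℝ) T) x) / (2 * q x))
      (Ico (0:ℝ) T) :=
  (contDiffOn_derivWithin_Ico (contDiffOn_gammaOf (m := m + 1) hq hq0 ha)).neg.div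
    (contDiffOn_const.mul (contDiffOn_of_nat_le hq (by omega)))
    fun t ht => mul_ne_zero two_ne_zero (hq0 t ht)

lemma contDiffOn_alphaSeq {T : ℝ} {q : ℝ → ℝ} {k : ℕ}
    (hq : ContDiffOn ℝ (2 * k - 2 : ℕ) q (Ico (0:ℝ) T)) (hq0 : ∀ t ∈ Ico (0:ℝ) T, q t ≠ 0)
    (C₀ : ℝ) (i : ℕ) (hi : i + 2 ≤ k) :
    ContDiffOn ℝ (2 * k - 2 * i - 2 : ℕ) (alphaSeq T q C₀ i) (Ico (0:ℝ) T) := by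
  induction i with
  | zero => exact contDiffOn_const.mul hq
  | succ i ih =>
    obtain ⟨m, hm⟩ : ∃ m, 2 * k - 2 * i - 2 = m + 3 := ⟨2 * k - 2 * i - 5, by omega⟩
    have ha := ih (by omega)
    rw [hm] at ha
    rw [show 2 * k - 2 * (i + 1) - 2 = m + 1 by omega]
    exact (contDiffOn_of_nat_le hq (by omega)).mul (contDiffOn_primitiveOf
      (contDiffOn_alphaSeq_integrand (contDiffOn_of_nat_le hq (by omega)) hq0 ha))

lemma derivWithin_div_sq {T : ℝ} {q a : ℝ → ℝ} {t : ℝ} (ht : t ∈ Ico (0:ℝ) T)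
    (hq : DifferentiableWithinAt ℝ q (Ico (0:ℝ) T) t) (hq0 : q t ≠ 0)
    (ha : DifferentiableWithinAt ℝ a (Ico (0:ℝ) T) t) :
    derivWithin (fun s => a s / q s ^ 2) (Ico (0:ℝ) T) t = betaOf T q a t / q t ^ 2 := by
  have h := ha.hasDerivWithinAt.fun_div (hq.hasDerivWithinAt.fun_pow 2) (pow_ne_zero 2 hq0)
  rw [h.derivWithin (uniqueDiffOn_Ico _ _ t ht), betaOf]
  field_simp
  norm_num
  ring

/-- The second equation of the system in the form `(q F)' + β = 2 q F'`, where `α = q F`. -/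
lemma derivWithin_mul_add_betaOf {T : ℝ} {q F : ℝ → ℝ} {t F' : ℝ} (ht : t ∈ Ico (0:ℝ) T)
    (hq : DifferentiableWithinAt ℝ q (Ico (0:ℝ) T) t) (hq0 : q t ≠ 0)
    (hF : HasDerivWithinAt F F' (Ico (0:ℝ) T) t) :
    derivWithin (fun s => q s * F s) (Ico (0:ℝ) T) t + betaOf T q (fun s => q s * F s) t
      = 2 * q t * F' := by
  have h := hq.hasDerivWithinAt.fun_mul hF
  rw [betaOf, h.derivWithin (uniqueDiffOn_Ico _ _ t ht)]
  field_simp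
  ring

/-- The cancellation in the derivative of the form: `A i` stands for `α_i' + β_i`, `B i` for `β_i'`
and `G i` for `γ_i'`. -/
lemma telescoping_sum (m : ℕ) (A B G x : ℕ → ℝ) (P R : ℝ) (h0 : A 0 = 0)
    (hA : ∀ i < m, A (i + 1) = -G i) :
    ∑ i ∈ Finset.range (m + 1), A i * x i * P + ∑ i ∈ Finset.range (m + 1), B i * x i * R
      + ∑ i ∈ Finset.range m, (G i * x (i + 1) * P - B i * x i * R) = B m * x m * R := by
  rw [Finset.sum_range_succ' (fun i => A i * x i * P), Finset.sum_range_succ, h0,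
    Finset.sum_sub_distrib,
    Finset.sum_congr rfl fun i hi => by rw [hA i (Finset.mem_range.1 hi)]]
  simp only [neg_mul, Finset.sum_neg_distrib]
  ring

lemma hasDerivWithinAt_norm_sq {s : Set ℝ} {w : ℝ → ℂ} {w' : ℂ} {t : ℝ}
    (hw : HasDerivWithinAt w w' s t) :
    HasDerivWithinAt (fun s => ‖w s‖ ^ 2) (2 * ((starRingEnd ℂ) (w t) * w').re) s t := by
  have h := hw.norm_sq
  rwa [Complex.inner, mul_comm w'] at h

lemma hasDerivWithinAt_re_conj_mul {s : Set ℝ} {v w : ℝ → ℂ} {v' w' : ℂ} {t : ℝ}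
    (hv : HasDerivWithinAt v v' s t) (hw : HasDerivWithinAt w w' s t) :
    HasDerivWithinAt (fun s => ((starRingEnd ℂ) (v s) * w s).re)
      (((starRingEnd ℂ) (v t) * w').re + ((starRingEnd ℂ) v' * w t).re) s t := by
  have h := hv.inner ℝ hw
  simpa only [Complex.inner, mul_comm] using h

/-- The derivative of the form along solutions of the Liouville equation, for arbitrary coefficients
satisfying the system. -/
lemma hasDerivWithinAt_quadFormE {T : ℝ} {m : ℕ} {q : ℝ → ℝ} {α β γ : ℕ → ℝ → ℝ}
    (hq : DifferentiableOn ℝ q (Ico (0:ℝ) T)) (hq0 : ∀ t ∈ Ico (0:ℝ) T, q t ≠ 0)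
    (hα : ∀ i ≤ m, DifferentiableOn ℝ (α i) (Ico (0:ℝ) T))
    (hβ : ∀ i ≤ m, DifferentiableOn ℝ (β i) (Ico (0:ℝ) T))
    (hγ : ∀ i < m, DifferentiableOn ℝ (γ i) (Ico (0:ℝ) T))
    (h1 : ∀ i ≤ m, ∀ t ∈ Ico (0:ℝ) T,
      derivWithin (fun s => α i s / q s ^ 2) (Ico (0:ℝ) T) t = β i t / q t ^ 2)
    (h2 : ∀ t ∈ Ico (0:ℝ) T, derivWithin (α 0) (Ico (0:ℝ) T) t + β 0 t = 0)
    (h3 : ∀ i < m, ∀ t ∈ Ico (0:ℝ) T, derivWithin (α (i + 1)) (Ico (0:ℝ) T) t + β (i + 1) t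
      = -(derivWithin (γ i) (Ico (0:ℝ) T) t))
    (h4 : ∀ i ≤ m, ∀ t ∈ Ico (0:ℝ) T,
      derivWithin (β i) (Ico (0:ℝ) T) t = 2 * γ i t / q t ^ 2)
    {n : ℕ} (ξ : EuclideanSpace ℝ (Fin n)) (w : ℝ → ℂ)
    (hw : DifferentiableOn ℝ w (Ico (0:ℝ) T))
    (hw' : ∀ t ∈ Ico (0:ℝ) T, HasDerivWithinAt (derivWithin w (Ico (0:ℝ) T))
      (((-(‖ξ‖ ^ 2 / q t ^ 2) : ℝ) : ℂ) * w t) (Ico (0:ℝ) T) t)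
    {t : ℝ} (ht : t ∈ Ico (0:ℝ) T) :
    HasDerivWithinAt (fun s => quadFormE T (m + 2) q α β γ ξ w s)
      (derivWithin (β m) (Ico (0:ℝ) T) t * ‖ξ‖ ^ 2 *
        ((starRingEnd ℂ) (w t) * derivWithin w (Ico (0:ℝ) T) t).re) (Ico (0:ℝ) T) t := by
  have hwd := (hw t ht).hasDerivWithinAt
  have hwd' := hw' t ht
  have hQ := hasDerivWithinAt_norm_sq hwd
  have hP := hasDerivWithinAt_norm_sq hwd'
  have hR := hasDerivWithinAt_re_conj_mul hwd hwd'
  simp only [quadFormE, show m + 2 - 1 = m + 1 by omega, show m + 2 - 2 = m by omega]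
  set v := derivWithin w (Ico (0:ℝ) T)
  set c := ‖ξ‖
  set R := ((starRingEnd ℂ) (w t) * v t).re with hRdef
  have hPval : 2 * ((starRingEnd ℂ) (v t) * (((-(c ^ 2 / q t ^ 2) : ℝ) : ℂ) * w t)).re
      = -(2 * c ^ 2 / q t ^ 2 * R) := by
    simp only [hRdef, Complex.mul_re, Complex.mul_im, Complex.conj_re, Complex.conj_im,
      Complex.ofReal_re, Complex.ofReal_im]
    ring
  have hRval : ((starRingEnd ℂ) (w t) * (((-(c ^ 2 / q t ^ 2) : ℝ) : ℂ) * w t)).re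
      + ((starRingEnd ℂ) (v t) * v t).re = ‖v t‖ ^ 2 - c ^ 2 / q t ^ 2 * ‖w t‖ ^ 2 := by
    simp only [← Complex.normSq_eq_norm_sq, Complex.normSq_apply, Complex.mul_re, Complex.mul_im,
      Complex.conj_re, Complex.conj_im, Complex.ofReal_re, Complex.ofReal_im]
    ring
  rw [hPval] at hP
  rw [hRval] at hR
  have hA : ∀ i ∈ Finset.range (m + 1), HasDerivWithinAt
      (fun s => α i s * c ^ (2 * (m + 2) - 2 * i - 2) * (‖v s‖ ^ 2 + c ^ 2 * ‖w s‖ ^ 2 / q s ^ 2))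
      (derivWithin (α i) (Ico (0:ℝ) T) t * c ^ (2 * (m + 2) - 2 * i - 2) * ‖v t‖ ^ 2
        + β i t / q t ^ 2 * c ^ (2 * (m + 2) - 2 * i - 2) * c ^ 2 * ‖w t‖ ^ 2)
      (Ico (0:ℝ) T) t := by
    intro i hi
    have hi' : i ≤ m := Nat.lt_succ_iff.1 (Finset.mem_range.1 hi)
    have ha := (hα i hi' t ht).hasDerivWithinAt
    have hb : HasDerivWithinAt (fun s => α i s / q s ^ 2) (β i t / q t ^ 2) (Ico (0:ℝ) T) t := by
      rw [← h1 i hi' t ht]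
      exact ((hα i hi' t ht).fun_div ((hq t ht).fun_pow 2)
        (pow_ne_zero 2 (hq0 t ht))).hasDerivWithinAt
    have h := ((ha.fun_mul hP).const_mul (c ^ (2 * (m + 2) - 2 * i - 2))).fun_add
      ((hb.fun_mul hQ).const_mul (c ^ (2 * (m + 2) - 2 * i - 2) * c ^ 2))
    refine (h.congr_deriv (by ring)).congr_of_mem (fun s _ => by ring) ht
  have hB : ∀ i ∈ Finset.range (m + 1), HasDerivWithinAt
      (fun s => β i s * c ^ (2 * (m + 2) - 2 * i - 2) * ((starRingEnd ℂ) (w s) * v s).re)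
      (derivWithin (β i) (Ico (0:ℝ) T) t * c ^ (2 * (m + 2) - 2 * i - 2) * R
        + β i t * c ^ (2 * (m + 2) - 2 * i - 2) * (‖v t‖ ^ 2 - c ^ 2 / q t ^ 2 * ‖w t‖ ^ 2))
      (Ico (0:ℝ) T) t := fun i hi =>
    (((hβ i (Nat.lt_succ_iff.1 (Finset.mem_range.1 hi)) t ht).hasDerivWithinAt.mul_const
      _).fun_mul hR)
  have hG : ∀ i ∈ Finset.range m, HasDerivWithinAt
      (fun s => γ i s * c ^ (2 * (m + 2) - 2 * i - 4) * ‖v s‖ ^ 2)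
      (derivWithin (γ i) (Ico (0:ℝ) T) t * c ^ (2 * (m + 2) - 2 * (i + 1) - 2) * ‖v t‖ ^ 2
        - derivWithin (β i) (Ico (0:ℝ) T) t * c ^ (2 * (m + 2) - 2 * i - 2) * R)
      (Ico (0:ℝ) T) t := by
    intro i hi
    have hi' := Finset.mem_range.1 hi
    refine (((hγ i hi' t ht).hasDerivWithinAt.mul_const _).fun_mul hP).congr_deriv ?_
    rw [h4 i hi'.le t ht, show 2 * (m + 2) - 2 * (i + 1) - 2 = 2 * (m + 2) - 2 * i - 4 by omega,
      show 2 * (m + 2) - 2 * i - 2 = 2 * (m + 2) - 2 * i - 4 + 2 by omega, pow_add]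
    ring
  refine (((HasDerivWithinAt.fun_sum hA).fun_add (HasDerivWithinAt.fun_sum hB)).fun_add
    (HasDerivWithinAt.fun_sum hG)).congr_deriv ?_
  have key := telescoping_sum m (fun i => derivWithin (α i) (Ico (0:ℝ) T) t + β i t)
    (fun i => derivWithin (β i) (Ico (0:ℝ) T) t) (fun i => derivWithin (γ i) (Ico (0:ℝ) T) t)
    (fun i => c ^ (2 * (m + 2) - 2 * i - 2)) (‖v t‖ ^ 2) R (h2 t ht) fun i hi => h3 i hi t ht
  simp only [show 2 * (m + 2) - 2 * m - 2 = 2 by omega] at key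
  rw [← key]
  congr 1
  rw [← Finset.sum_add_distrib, ← Finset.sum_add_distrib]
  exact Finset.sum_congr rfl fun i _ => by ring


/-- existence of coefficients `α_i, β_i, γ_i` with `α₀ = C₀·q`, the
regularity classes of Proposition 1, satisfying the system (S), and such that along
every solution of the Liouville equation `w'' = −(‖ξ‖²/q²)w` the quadratic form
`𝓔_k(ξ,·)` has derivative `β_{k−2}'·‖ξ‖²·Re(w̄·w')` on `[0,T)`. -/
theorem exists_coefficients_quadratic_form
    (T : ℝ) (hT : 0 < T) (k : ℕ) (hk : 3 ≤ k)
    (q : ℝ → ℝ)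
    (hq : ContDiffOn ℝ (2 * k - 2 : ℕ) q (Ico (0:ℝ) T))
    (hq0 : ∀ t ∈ Ico (0:ℝ) T, q t ≠ 0)
    (C₀ : ℝ) :
    ∃ α β γ : ℕ → ℝ → ℝ,
      (∀ t ∈ Ico (0:ℝ) T, α 0 t = C₀ * q t)
      ∧ (∀ i ≤ k - 2, ContDiffOn ℝ (2 * k - 2 * i - 2 : ℕ) (α i) (Ico (0:ℝ) T))
      ∧ (∀ i ≤ k - 2, ContDiffOn ℝ (2 * k - 2 * i - 3 : ℕ) (β i) (Ico (0:ℝ) T))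
      ∧ (∀ i ≤ k - 2, ContDiffOn ℝ (2 * k - 2 * i - 4 : ℕ) (γ i) (Ico (0:ℝ) T))
      ∧ (∀ i ≤ k - 2, ∀ t ∈ Ico (0:ℝ) T,
          derivWithin (fun s => α i s / q s ^ 2) (Ico (0:ℝ) T) t = β i t / q t ^ 2)
      ∧ (∀ t ∈ Ico (0:ℝ) T, derivWithin (α 0) (Ico (0:ℝ) T) t + β 0 t = 0)
      ∧ (∀ i, 1 ≤ i → i ≤ k - 2 → ∀ t ∈ Ico (0:ℝ) T,
          derivWithin (α i) (Ico (0:ℝ) T) t + β i t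
            = -(derivWithin (γ (i - 1)) (Ico (0:ℝ) T) t))
      ∧ (∀ i ≤ k - 2, ∀ t ∈ Ico (0:ℝ) T,
          derivWithin (β i) (Ico (0:ℝ) T) t = 2 * γ i t / q t ^ 2)
      ∧ (∀ n : ℕ, 1 ≤ n → ∀ ξ : EuclideanSpace ℝ (Fin n), ∀ w : ℝ → ℂ,
          DifferentiableOn ℝ w (Ico (0:ℝ) T) →
          (∀ t ∈ Ico (0:ℝ) T,
            HasDerivWithinAt (derivWithin w (Ico (0:ℝ) T))
              (((-(‖ξ‖ ^ 2 / q t ^ 2) : ℝ) : ℂ) * w t) (Ico (0:ℝ) T) t) →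
          ∀ t ∈ Ico (0:ℝ) T,
            HasDerivWithinAt (fun s => quadFormE T k q α β γ ξ w s)
              (derivWithin (β (k - 2)) (Ico (0:ℝ) T) t * ‖ξ‖ ^ 2 *
                ((starRingEnd ℂ) (w t) * derivWithin w (Ico (0:ℝ) T) t).re)
              (Ico (0:ℝ) T) t) := by
  obtain ⟨m, rfl⟩ : ∃ m, k = m + 2 := ⟨k - 2, by omega⟩
  simp only [show m + 2 - 2 = m by omega]
  have hqd : DifferentiableOn ℝ q (Ico (0:ℝ) T) :=
    hq.differentiableOn (by norm_cast; omega)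
  have hα := fun i (hi : i ≤ m) => contDiffOn_alphaSeq hq hq0 C₀ i (by omega)
  have hβ : ∀ i ≤ m, ContDiffOn ℝ (2 * (m + 2) - 2 * i - 3 : ℕ)
      (betaOf T q (alphaSeq T q C₀ i)) (Ico (0:ℝ) T) := fun i hi =>
    contDiffOn_betaOf (contDiffOn_of_nat_le hq (by omega)) hq0
      (contDiffOn_of_nat_le (hα i hi) (by omega))
  have hγ : ∀ i ≤ m, ContDiffOn ℝ (2 * (m + 2) - 2 * i - 4 : ℕ)
      (gammaOf T q (alphaSeq T q C₀ i)) (Ico (0:ℝ) T) := fun i hi =>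
    contDiffOn_gammaOf (contDiffOn_of_nat_le hq (by omega)) hq0
      (contDiffOn_of_nat_le (hα i hi) (by omega))
  have hαd : ∀ i ≤ m, DifferentiableOn ℝ (alphaSeq T q C₀ i) (Ico (0:ℝ) T) := fun i hi =>
    (hα i hi).differentiableOn (by norm_cast; omega)
  have hβd : ∀ i ≤ m, DifferentiableOn ℝ (betaOf T q (alphaSeq T q C₀ i)) (Ico (0:ℝ) T) :=
    fun i hi => (hβ i hi).differentiableOn (by norm_cast; omega)
  have hγd : ∀ i < m, DifferentiableOn ℝ (gammaOf T q (alphaSeq T q C₀ i)) (Ico (0:ℝ) T) :=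
    fun i hi => (hγ i hi.le).differentiableOn (by norm_cast; omega)
  have h1 := fun i (hi : i ≤ m) t ht =>
    derivWithin_div_sq ht (hqd t ht) (hq0 t ht) (hαd i hi t ht)
  have h2 : ∀ t ∈ Ico (0:ℝ) T, derivWithin (alphaSeq T q C₀ 0) (Ico (0:ℝ) T) t
      + betaOf T q (alphaSeq T q C₀ 0) t = 0 := by
    intro t ht
    have h := derivWithin_mul_add_betaOf ht (hqd t ht) (hq0 t ht)
      (hasDerivWithinAt_const t _ C₀)
    simpa only [alphaSeq, mul_comm C₀, mul_zero] using h
  have h3 : ∀ i < m, ∀ t ∈ Ico (0:ℝ) T, derivWithin (alphaSeq T q C₀ (i + 1)) (Ico (0:ℝ) T) t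
      + betaOf T q (alphaSeq T q C₀ (i + 1)) t
      = -(derivWithin (gammaOf T q (alphaSeq T q C₀ i)) (Ico (0:ℝ) T) t) := by
    intro i hi t ht
    have hc := (contDiffOn_alphaSeq_integrand (m := 0) (contDiffOn_of_nat_le hq (by omega)) hq0
      (contDiffOn_of_nat_le (hα i hi.le) (by omega))).continuousOn
    have h := derivWithin_mul_add_betaOf ht (hqd t ht) (hq0 t ht)
      (hasDerivWithinAt_primitiveOf hc ht)
    refine h.trans ?_
    have := hq0 t ht
    field_simp
  have h4 : ∀ i ≤ m, ∀ t ∈ Ico (0:ℝ) T,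
      derivWithin (betaOf T q (alphaSeq T q C₀ i)) (Ico (0:ℝ) T) t
      = 2 * gammaOf T q (alphaSeq T q C₀ i) t / q t ^ 2 := by
    intro i _ t ht
    have := hq0 t ht
    rw [gammaOf]
    field_simp
  refine ⟨alphaSeq T q C₀, fun i => betaOf T q (alphaSeq T q C₀ i),
    fun i => gammaOf T q (alphaSeq T q C₀ i), fun t _ => rfl, hα, hβ, hγ, h1, h2, ?_, h4, ?_⟩
  · intro i hi him t ht
    obtain ⟨j, rfl⟩ : ∃ j, i = j + 1 := ⟨i - 1, by omega⟩
    exact h3 j (by omega) t ht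
  · intro n _ ξ w hw hw' t ht
    exact hasDerivWithinAt_quadFormE hqd hq0 hαd hβd hγd h1 h2 h3 h4 ξ w hw hw' ht
end

section
/- Define β := −G_{k−2}'. Then there exists a real polynomial Q in 2k−3 variables such that for all t ∈ [0,T): β'(t)·q'(t) = (β·q')'(t) + R'(t), where R : ℝ → ℝ is the function R(t) = Q(q(t), q'(t), …, q^{(2k−4)}(t)) and R is differentiable on [0,T). In other words, β_{k−2}'·q' differs from the derivative of β_{k−2}·q' by the derivative of a polynomial expression in q and its derivatives of order ≤ 2k−4 on [0,T). -/
/-!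
Write `H_i = G_i / q`. Since `β' q' = (β q')' + G_{k-2}' q''`, it suffices to find a primitive of
`G_n' q''`, `n = k - 2`, that is a polynomial in `q, …, q^{(2n)}`. This is a bi-Hamiltonian
(Lenard) recursion argument. The operators `f ↦ f'''` and `f ↦ (1/q)(f/q)'` are both
skew-symmetric modulo exact derivatives, and the recursion says
`G_i G_j''' = -4 H_i H_{j+1}'`. Skewness of both gives, for `i ≥ 1`,
`H_{i-1} H_{j+1}' = H_i H_j' - (H_i H_j)' - (1/4) S_{j,i-1}'`,
where `S_{i,j} = G_i G_j'' - G_i' G_j' + G_i'' G_j`. Iterating it (`LenardData.chain`) relates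
`H_N H_1'` to `H_1 H_N'` modulo derivatives of differential polynomials of order at most `2N`.

The relation is used twice. One further step of the iteration yields `2 C₀ H_{N+1}'` as the
derivative of a differential polynomial, so by induction every `H_i` is a differential polynomial
of order at most `2i` (`LenardData.isDiffPoly_H`). For `N = n`, comparison with
`(H_1 H_n)' = H_1 H_n' + H_n H_1'` shows that `H_n H_1'` is exact, and finally
`G_n' q'' = (G_n q'')' - G_n q''' = (G_n q'')' + (4 / C₀) H_n H_1'`.
-/

/-- On the set `I`, the function `f` is a polynomial with constant coefficients in the first `M`
derivatives `q, q', …, q^{(M-1)}` taken within `I`. -/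
def IsDiffPoly (q : ℝ → ℝ) (I : Set ℝ) (M : ℕ) (f : ℝ → ℝ) : Prop :=
  ∃ Q : MvPolynomial (Fin M) ℝ, ∀ t ∈ I,
    f t = MvPolynomial.eval (fun j : Fin M => iteratedDerivWithin (j : ℕ) q I t) Q

namespace IsDiffPoly

variable {q : ℝ → ℝ} {I : Set ℝ} {M : ℕ} {f g : ℝ → ℝ}

lemma const (c : ℝ) : IsDiffPoly q I M (fun _ => c) :=
  ⟨MvPolynomial.C c, fun t _ => by simp⟩

lemma add (hf : IsDiffPoly q I M f) (hg : IsDiffPoly q I M g) :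
    IsDiffPoly q I M (fun t => f t + g t) := by
  obtain ⟨P, hP⟩ := hf
  obtain ⟨Q, hQ⟩ := hg
  exact ⟨P + Q, fun t ht => by simp [hP t ht, hQ t ht]⟩

lemma mul (hf : IsDiffPoly q I M f) (hg : IsDiffPoly q I M g) :
    IsDiffPoly q I M (fun t => f t * g t) := by
  obtain ⟨P, hP⟩ := hf
  obtain ⟨Q, hQ⟩ := hg
  exact ⟨P * Q, fun t ht => by simp [hP t ht, hQ t ht]⟩

lemma const_mul (c : ℝ) (hf : IsDiffPoly q I M f) : IsDiffPoly q I M (fun t => c * f t) :=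
  (const c).mul hf

lemma sub (hf : IsDiffPoly q I M f) (hg : IsDiffPoly q I M g) :
    IsDiffPoly q I M (fun t => f t - g t) := by
  obtain ⟨P, hP⟩ := hf
  obtain ⟨Q, hQ⟩ := hg
  exact ⟨P - Q, fun t ht => by simp [hP t ht, hQ t ht]⟩

lemma congr (hf : IsDiffPoly q I M f) (h : ∀ t ∈ I, g t = f t) : IsDiffPoly q I M g := by
  obtain ⟨P, hP⟩ := hf
  exact ⟨P, fun t ht => by rw [h t ht, hP t ht]⟩

lemma mono {M' : ℕ} (hf : IsDiffPoly q I M f) (h : M ≤ M') : IsDiffPoly q I M' f := by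
  obtain ⟨P, hP⟩ := hf
  refine ⟨MvPolynomial.rename (Fin.castLE h) P, fun t ht => ?_⟩
  rw [hP t ht, MvPolynomial.eval_rename]
  rfl

lemma iteratedDerivWithin {j : ℕ} (h : j < M) :
    IsDiffPoly q I M (iteratedDerivWithin j q I) :=
  ⟨MvPolynomial.X ⟨j, h⟩, fun t _ => by simp⟩

/-- Differentiating a polynomial in the first `M` derivatives of `q` involves one more of them. -/
lemma exists_deriv_eval (hI : UniqueDiffOn ℝ I) (hq : ContDiffOn ℝ M q I)
    (Q : MvPolynomial (Fin M) ℝ) :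
    ∃ g : ℝ → ℝ, IsDiffPoly q I (M + 1) g ∧ ∀ t ∈ I, HasDerivWithinAt
      (fun s => MvPolynomial.eval
        (fun j : Fin M => _root_.iteratedDerivWithin (j : ℕ) q I s) Q) (g t) I t := by
  induction Q using MvPolynomial.induction_on with
  | C c =>
    refine ⟨fun _ => 0, const 0, fun t _ => ?_⟩
    simpa using hasDerivWithinAt_const t I c
  | add P Q hP hQ =>
    obtain ⟨p, hp, hp'⟩ := hP
    obtain ⟨r, hr, hr'⟩ := hQ
    refine ⟨_, hp.add hr, fun t ht => ?_⟩
    simpa using (hp' t ht).fun_add (hr' t ht)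
  | mul_X P j hP =>
    obtain ⟨p, hp, hp'⟩ := hP
    have hPd : IsDiffPoly q I (M + 1) (fun s => MvPolynomial.eval
        (fun j : Fin M => _root_.iteratedDerivWithin (j : ℕ) q I s) P) :=
      IsDiffPoly.mono (M := M) ⟨P, fun t _ => rfl⟩ (Nat.le_succ M)
    have hj : ∀ t ∈ I, HasDerivWithinAt (_root_.iteratedDerivWithin (j : ℕ) q I)
        (_root_.iteratedDerivWithin (j + 1 : ℕ) q I t) I t := fun t ht => by
      rw [iteratedDerivWithin_succ]
      exact (hq.differentiableOn_iteratedDerivWithin (by exact_mod_cast j.2) hI t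
        ht).hasDerivWithinAt
    refine ⟨_, (hp.mul (iteratedDerivWithin (j := j) (by omega))).add
      (hPd.mul (iteratedDerivWithin (j := j + 1) (by omega))), fun t ht => ?_⟩
    simpa using (hp' t ht).fun_mul (hj t ht)

lemma exists_deriv (hI : UniqueDiffOn ℝ I) (hq : ContDiffOn ℝ M q I) (hf : IsDiffPoly q I M f) :
    ∃ g : ℝ → ℝ, IsDiffPoly q I (M + 1) g ∧ ∀ t ∈ I, HasDerivWithinAt f (g t) I t := by
  obtain ⟨P, hP⟩ := hf
  obtain ⟨g, hg, hg'⟩ := exists_deriv_eval hI hq P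
  exact ⟨g, hg, fun t ht => (hg' t ht).congr hP (hP t ht)⟩

lemma deriv (hI : UniqueDiffOn ℝ I) (hq : ContDiffOn ℝ M q I) (hf : IsDiffPoly q I M f)
    (hg : ∀ t ∈ I, HasDerivWithinAt f (g t) I t) : IsDiffPoly q I (M + 1) g := by
  obtain ⟨g', hg', h⟩ := hf.exists_deriv hI hq
  exact hg'.congr fun t ht => (hI t ht).eq_deriv I (hg t ht) (h t ht)

end IsDiffPoly

/-- The Lenard recursion up to level `n` on `I`: `G1`, `G2`, `G3` are the successive derivatives of
`G`, the functions `H i = G i / q` have derivatives `H1 i`, and `H1 (i + 1) = -(1/4) q G3 i`.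
Only the levels `i < n` need more than one derivative of `G i`. -/
structure LenardData (I : Set ℝ) (n : ℕ) (C₀ : ℝ) (q : ℝ → ℝ)
    (G G1 G2 G3 H H1 : ℕ → ℝ → ℝ) : Prop where
  convex : Convex ℝ I
  uniqueDiff : UniqueDiffOn ℝ I
  contDiff : ContDiffOn ℝ (2 * n + 2 : ℕ) q I
  ne_zero : C₀ ≠ 0
  hG : ∀ i ≤ n, ∀ t ∈ I, HasDerivWithinAt (G i) (G1 i t) I t
  hG1 : ∀ i < n, ∀ t ∈ I, HasDerivWithinAt (G1 i) (G2 i t) I t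
  hG2 : ∀ i < n, ∀ t ∈ I, HasDerivWithinAt (G2 i) (G3 i t) I t
  hH : ∀ i ≤ n, ∀ t ∈ I, HasDerivWithinAt (H i) (H1 i t) I t
  eq_mul : ∀ i ≤ n, ∀ t ∈ I, G i t = q t * H i t
  H_zero : ∀ t ∈ I, H 0 t = C₀
  lenard : ∀ i < n, ∀ t ∈ I, H1 (i + 1) t = -(1 / 4) * q t * G3 i t

namespace LenardData

variable {I : Set ℝ} {n : ℕ} {C₀ : ℝ} {q : ℝ → ℝ} {G G1 G2 G3 H H1 : ℕ → ℝ → ℝ}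

/-- The symmetric bilinear primitive of `G_i G_j''' + G_i''' G_j`. -/
lemma hasDeriv_S (L : LenardData I n C₀ q G G1 G2 G3 H H1) {i j : ℕ} (hi : i < n) (hj : j < n)
    {t : ℝ} (ht : t ∈ I) :
    HasDerivWithinAt (fun s => G i s * G2 j s - G1 i s * G1 j s + G2 i s * G j s)
      (G i t * G3 j t + G3 i t * G j t) I t := by
  have h := (((L.hG i hi.le t ht).fun_mul (L.hG2 j hj t ht)).fun_sub
    ((L.hG1 i hi t ht).fun_mul (L.hG1 j hj t ht))).fun_add
    ((L.hG2 i hi t ht).fun_mul (L.hG j hj.le t ht))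
  refine h.congr_deriv ?_
  ring

lemma isDiffPoly_G (L : LenardData I n C₀ q G G1 G2 G3 H H1) {i : ℕ} (hi : i ≤ n)
    (hH : IsDiffPoly q I (2 * i + 1) (H i)) : IsDiffPoly q I (2 * i + 1) (G i) := by
  have hq : IsDiffPoly q I (2 * i + 1) q := by
    have := IsDiffPoly.iteratedDerivWithin (q := q) (I := I) (j := 0) (M := 2 * i + 1) (by omega)
    rwa [iteratedDerivWithin_zero] at this
  exact (hq.mul hH).congr (L.eq_mul i hi)

lemma isDiffPoly_S (L : LenardData I n C₀ q G G1 G2 G3 H H1) {i j M : ℕ} (hi : i < n) (hj : j < n)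
    (hiM : 2 * i + 3 ≤ M) (hjM : 2 * j + 3 ≤ M)
    (hHi : IsDiffPoly q I (2 * i + 1) (H i)) (hHj : IsDiffPoly q I (2 * j + 1) (H j)) :
    IsDiffPoly q I M (fun s => G i s * G2 j s - G1 i s * G1 j s + G2 i s * G j s) := by
  have key : ∀ l < n, 2 * l + 3 ≤ M → IsDiffPoly q I (2 * l + 1) (H l) →
      IsDiffPoly q I M (G l) ∧ IsDiffPoly q I M (G1 l) ∧ IsDiffPoly q I M (G2 l) := by
    intro l hl hlM h
    have h0 := L.isDiffPoly_G hl.le h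
    have h1 := h0.deriv L.uniqueDiff (L.contDiff.of_le (by exact_mod_cast (by omega)))
      (L.hG l hl.le)
    have h2 := h1.deriv L.uniqueDiff (L.contDiff.of_le (by exact_mod_cast (by omega)))
      (L.hG1 l hl)
    exact ⟨h0.mono (by omega), h1.mono (by omega), h2.mono (by omega)⟩
  obtain ⟨a, a1, a2⟩ := key i hi hiM hHi
  obtain ⟨b, b1, b2⟩ := key j hj hjM hHj
  exact ((a.mul b2).sub (a1.mul b1)).add (a2.mul b)

/-- One Lenard step: moving an index from the first factor of `H_{i+1} H_j'` to the second one
costs only exact terms. -/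
lemma step (L : LenardData I n C₀ q G G1 G2 G3 H H1) {i j : ℕ} (hi : i < n) (hj : j < n)
    {t : ℝ} (ht : t ∈ I) :
    H i t * H1 (j + 1) t = H (i + 1) t * H1 j t
      - (H1 (i + 1) t * H j t + H (i + 1) t * H1 j t)
      - 1 / 4 * (G j t * G3 i t + G3 j t * G i t) := by
  rw [L.lenard i hi t ht, L.lenard j hj t ht, L.eq_mul i hi.le t ht, L.eq_mul j hj.le t ht]
  ring

/-- Iterated Lenard steps: `H_{N+1-j} H_j'` and `H_N H_1'` differ by the derivative of a
differential polynomial of order at most `2N`. -/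
lemma chain (L : LenardData I n C₀ q G G1 G2 G3 H H1) {N : ℕ} (hN : N ≤ n)
    (hDP : ∀ i ≤ N, IsDiffPoly q I (2 * i + 1) (H i)) (j : ℕ) (hj : j + 1 ≤ N) :
    ∃ X : ℝ → ℝ, IsDiffPoly q I (2 * N + 1) X ∧ ∀ t ∈ I,
      HasDerivWithinAt X (H (N - j) t * H1 (j + 1) t - H N t * H1 1 t) I t := by
  induction j with
  | zero =>
    exact ⟨fun _ => 0, .const 0, fun t _ => by simpa using hasDerivWithinAt_const t I (0 : ℝ)⟩
  | succ j ih =>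
    obtain ⟨X, hX, hX'⟩ := ih (by omega)
    obtain ⟨i, hi⟩ : ∃ i, N - j = i + 1 := ⟨N - j - 1, by omega⟩
    have hi' : N - (j + 1) = i := by omega
    rw [hi] at hX'
    rw [hi']
    refine ⟨_, (hX.sub (((hDP (i + 1) (by omega)).mono (by omega)).mul
      ((hDP (j + 1) (by omega)).mono (by omega)))).sub ((L.isDiffPoly_S (i := j + 1) (j := i)
        (M := 2 * N + 1) (by omega) (by omega) (by omega) (by omega)
        (hDP _ (by omega)) (hDP _ (by omega))).const_mul (1 / 4)), fun t ht => ?_⟩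
    refine (((hX' t ht).fun_sub ((L.hH (i + 1) (by omega) t ht).fun_mul
      (L.hH (j + 1) (by omega) t ht))).fun_sub
      ((L.hasDeriv_S (i := j + 1) (j := i) (by omega) (by omega) ht).const_mul
        (1 / 4))).congr_deriv ?_
    rw [L.step (i := i) (j := j + 1) (by omega) (by omega) ht]
    ring

/-- A function whose derivative is the derivative of a differential polynomial is itself one. -/
lemma isDiffPoly_of_deriv (L : LenardData I n C₀ q G G1 G2 G3 H H1) {M : ℕ} {f g Y : ℝ → ℝ}
    (hf : ∀ t ∈ I, HasDerivWithinAt f (g t) I t) (hY : IsDiffPoly q I M Y)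
    (hY' : ∀ t ∈ I, HasDerivWithinAt Y (g t) I t) : IsDiffPoly q I M f := by
  rcases I.eq_empty_or_nonempty with rfl | ⟨a, ha⟩
  · exact ⟨0, fun t ht => ht.elim⟩
  have hd : ∀ t ∈ I, HasDerivWithinAt (fun s => f s - Y s) 0 I t := fun t ht => by
    simpa using (hf t ht).fun_sub (hY' t ht)
  refine (hY.add (.const (f a - Y a))).congr fun t ht => ?_
  have := L.convex.is_const_of_fderivWithin_eq_zero (𝕜 := ℝ)
    (fun s hs => (hd s hs).differentiableWithinAt)
    (fun s hs => by
      have h := (hd s hs).hasFDerivWithinAt.fderivWithin (L.uniqueDiff s hs)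
      rw [h]; ext; simp) ha ht
  linarith

lemma isDiffPoly_H (L : LenardData I n C₀ q G G1 G2 G3 H H1) (i : ℕ) (hi : i ≤ n) :
    IsDiffPoly q I (2 * i + 1) (H i) := by
  induction i using Nat.strong_induction_on with
  | _ i ih =>
  rcases i with _ | N
  · exact (IsDiffPoly.const C₀).congr L.H_zero
  have hDP : ∀ i ≤ N, IsDiffPoly q I (2 * i + 1) (H i) := fun i h => ih i (by omega) (by omega)
  have hS := L.isDiffPoly_S (i := 0) (j := N) (M := 2 * (N + 1) + 1) (by omega) (by omega)
    (by omega) (by omega) (hDP 0 (by omega)) (hDP N le_rfl)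
  have hS' : ∀ t ∈ I, _ := fun t ht => L.hasDeriv_S (i := 0) (j := N) (by omega) (by omega) ht
  have hC := L.ne_zero
  rcases Nat.eq_zero_or_pos N with rfl | hN
  · refine L.isDiffPoly_of_deriv (L.hH 1 hi) (hS.const_mul (-1 / (8 * C₀)))
      fun t ht => ((hS' t ht).const_mul (-1 / (8 * C₀))).congr_deriv ?_
    rw [L.lenard 0 (by omega) t ht, L.eq_mul 0 (by omega) t ht, L.H_zero t ht]
    field_simp
    ring
  -- Two expressions of `C₀ H_{N+1}'` through `H_N H_1'`, of opposite sign modulo exact terms.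
  obtain ⟨X, hX, hX'⟩ := L.chain (N := N) (by omega) hDP (N - 1) (by omega)
  rw [show N - (N - 1) = 1 by omega, show N - 1 + 1 = N by omega] at hX'
  have hY := (((hX.mono (by omega : _ ≤ 2 * (N + 1) + 1)).sub
    (((hDP 1 hN).mono (by omega)).mul ((hDP N le_rfl).mono (by omega)))).sub
    (hS.const_mul (1 / 2))).const_mul (1 / (2 * C₀))
  refine L.isDiffPoly_of_deriv (L.hH (N + 1) hi) hY fun t ht => ?_
  refine ((((hX' t ht).fun_sub ((L.hH 1 (by omega) t ht).fun_mul
    (L.hH N (by omega) t ht))).fun_sub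
    ((hS' t ht).const_mul (1 / 2))).const_mul (1 / (2 * C₀))).congr_deriv ?_
  rw [L.lenard 0 (by omega) t ht, L.lenard N (by omega) t ht, L.eq_mul 0 (by omega) t ht,
    L.eq_mul N (by omega) t ht, L.H_zero t ht]
  field_simp
  ring

/-- `H_n H_1'` is the derivative of a differential polynomial of order at most `2n`. -/
lemma exists_primitive (L : LenardData I n C₀ q G G1 G2 G3 H H1) (hn : 1 ≤ n) :
    ∃ Y : ℝ → ℝ, IsDiffPoly q I (2 * n + 1) Y ∧
      ∀ t ∈ I, HasDerivWithinAt Y (H n t * H1 1 t) I t := by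
  obtain ⟨X, hX, hX'⟩ := L.chain (N := n) le_rfl L.isDiffPoly_H (n - 1) (by omega)
  rw [show n - (n - 1) = 1 by omega, show n - 1 + 1 = n by omega] at hX'
  refine ⟨_, ((((L.isDiffPoly_H 1 hn).mono (by omega)).mul (L.isDiffPoly_H n le_rfl)).sub
    hX).const_mul (1 / 2), fun t ht => ?_⟩
  refine ((((L.hH 1 hn t ht).fun_mul (L.hH n le_rfl t ht)).fun_sub
    (hX' t ht)).const_mul (1 / 2)).congr_deriv ?_
  ring

end LenardData

open Set

/-- with `β := −G_{k−2}'`, the function `β'·q'` differs from `(β·q')'`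
by the derivative of a polynomial expression in `q, q', …, q^{(2k−4)}` on `[0,T)`. -/
theorem beta_q_prime_is_exact
    (T : ℝ) (hT : 0 < T) (k : ℕ) (hk : 3 ≤ k)
    (q : ℝ → ℝ)
    (hq : ContDiffOn ℝ (2 * k - 2 : ℕ) q (Ico (0:ℝ) T))
    (hq0 : ∀ t ∈ Ico (0:ℝ) T, q t ≠ 0)
    (C₀ : ℝ) (hC₀ : C₀ ≠ 0)
    (G : ℕ → ℝ → ℝ)
    (hGreg : ∀ i ≤ k - 2, ContDiffOn ℝ (2 * k - 2 * i - 2 : ℕ) (G i) (Ico (0:ℝ) T))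
    (hG0 : ∀ t ∈ Ico (0:ℝ) T, G 0 t = C₀ * q t)
    (hGrec : ∀ i, 1 ≤ i → i ≤ k - 2 → ∀ t ∈ Ico (0:ℝ) T,
      derivWithin (fun s => G i s / q s) (Ico (0:ℝ) T) t
        = -(1/4) * q t * iteratedDerivWithin 3 (G (i - 1)) (Ico (0:ℝ) T) t)
    (β : ℝ → ℝ)
    (hβ : β = fun s => -(derivWithin (G (k - 2)) (Ico (0:ℝ) T) s)) :
    ∃ Q : MvPolynomial (Fin (2 * k - 3)) ℝ,
      DifferentiableOn ℝ
        (fun t => MvPolynomial.eval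
          (fun j : Fin (2 * k - 3) => iteratedDerivWithin (j : ℕ) q (Ico (0:ℝ) T) t) Q)
        (Ico (0:ℝ) T) ∧
      ∀ t ∈ Ico (0:ℝ) T,
        derivWithin β (Ico (0:ℝ) T) t * derivWithin q (Ico (0:ℝ) T) t
          = derivWithin (fun s => β s * derivWithin q (Ico (0:ℝ) T) s) (Ico (0:ℝ) T) t
            + derivWithin
              (fun s => MvPolynomial.eval
                (fun j : Fin (2 * k - 3) => iteratedDerivWithin (j : ℕ) q (Ico (0:ℝ) T) s) Q)
              (Ico (0:ℝ) T) t := by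
  obtain ⟨n, rfl⟩ : ∃ n, k = n + 2 := ⟨k - 2, by omega⟩
  have hn : 1 ≤ n := by omega
  simp only [Nat.add_sub_cancel] at hGreg hGrec hβ
  rw [show 2 * (n + 2) - 2 = 2 * n + 2 by omega] at hq
  rw [show 2 * (n + 2) - 3 = 2 * n + 1 by omega]
  set I : Set ℝ := Ico (0 : ℝ) T with hI
  have hU : UniqueDiffOn ℝ I := uniqueDiffOn_Ico 0 T
  have hGd : ∀ i ≤ n, ∀ m < 2 * n - 2 * i + 2, ∀ t ∈ I,
      HasDerivWithinAt (iteratedDerivWithin m (G i) I)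
        (iteratedDerivWithin (m + 1) (G i) I t) I t := by
    intro i hi m hm t ht
    rw [iteratedDerivWithin_succ]
    exact ((hGreg i hi).differentiableOn_iteratedDerivWithin
      (by exact_mod_cast (by omega)) hU t ht).hasDerivWithinAt
  have hqd : ∀ m < 2 * n + 2, ∀ t ∈ I, HasDerivWithinAt (iteratedDerivWithin m q I)
        (iteratedDerivWithin (m + 1) q I t) I t := by
    intro m hm t ht
    rw [iteratedDerivWithin_succ]
    exact (hq.differentiableOn_iteratedDerivWithin
      (by exact_mod_cast hm) hU t ht).hasDerivWithinAt
  have hGd0 : ∀ i ≤ n, ∀ t ∈ I,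
      HasDerivWithinAt (G i) (iteratedDerivWithin 1 (G i) I t) I t := fun i hi t ht => by
    simpa [iteratedDerivWithin_zero] using hGd i hi 0 (by omega) t ht
  have hqd0 : ∀ t ∈ I, HasDerivWithinAt q (iteratedDerivWithin 1 q I t) I t := fun t ht => by
    simpa [iteratedDerivWithin_zero] using hqd 0 (by omega) t ht
  have L : LenardData I n C₀ q G (fun i => iteratedDerivWithin 1 (G i) I)
      (fun i => iteratedDerivWithin 2 (G i) I) (fun i => iteratedDerivWithin 3 (G i) I)
      (fun i s => G i s / q s) (fun i => derivWithin (fun s => G i s / q s) I) :=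
    { convex := convex_Ico 0 T
      uniqueDiff := hU
      contDiff := hq
      ne_zero := hC₀
      hG := hGd0
      hG1 := fun i hi t ht => hGd i hi.le 1 (by omega) t ht
      hG2 := fun i hi t ht => hGd i hi.le 2 (by omega) t ht
      hH := fun i hi t ht => ((hGd0 i hi t ht).differentiableWithinAt.fun_div
        (hqd0 t ht).differentiableWithinAt (hq0 t ht)).hasDerivWithinAt
      eq_mul := fun i hi t ht => by
        have := hq0 t ht
        field_simp
      H_zero := fun t ht => by
        have := hq0 t ht
        simp only [hG0 t ht]
        field_simp
      lenard := fun i hi t ht => hGrec (i + 1) (by omega) (by omega) t ht }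
  obtain ⟨Y, hY, hY'⟩ := L.exists_primitive hn
  have hR : IsDiffPoly q I (2 * n + 1)
      (fun t => G n t * iteratedDerivWithin 2 q I t + 4 / C₀ * Y t) :=
    ((L.isDiffPoly_G le_rfl (L.isDiffPoly_H n le_rfl)).mul
      (.iteratedDerivWithin (by omega))).add (hY.const_mul _)
  have hR' : ∀ t ∈ I, HasDerivWithinAt
      (fun t => G n t * iteratedDerivWithin 2 q I t + 4 / C₀ * Y t)
      (iteratedDerivWithin 1 (G n) I t * iteratedDerivWithin 2 q I t) I t := by
    intro t ht
    refine (((hGd0 n le_rfl t ht).fun_mul (hqd 2 (by omega) t ht)).fun_add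
      ((hY' t ht).const_mul (4 / C₀))).congr_deriv ?_
    have h3 : iteratedDerivWithin 3 (G 0) I t = C₀ * iteratedDerivWithin 3 q I t := by
      rw [iteratedDerivWithin_congr (f := G 0) (g := fun s => C₀ * q s) hG0 ht]
      exact iteratedDerivWithin_const_mul_field _ _
    have h1 := L.lenard 0 hn t ht
    simp only [zero_add] at h1
    rw [h1, h3]
    have := hq0 t ht
    field_simp
    ring
  obtain ⟨Q, hQ⟩ := hR
  have hQ' : ∀ t ∈ I, HasDerivWithinAt (fun t => MvPolynomial.eval
      (fun j : Fin (2 * n + 1) => iteratedDerivWithin (j : ℕ) q I t) Q)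
      (iteratedDerivWithin 1 (G n) I t * iteratedDerivWithin 2 q I t) I t := fun t ht =>
    (hR' t ht).congr (fun s hs => (hQ s hs).symm) (hQ t ht).symm
  refine ⟨Q, fun t ht => (hQ' t ht).differentiableWithinAt, fun t ht => ?_⟩
  rw [(hQ' t ht).derivWithin (hU t ht)]
  have hq1 : HasDerivWithinAt (fun s => derivWithin q I s) (iteratedDerivWithin 2 q I t) I t := by
    simpa [funext fun s => congrFun (iteratedDerivWithin_one (f := q) (s := I)) s]
      using hqd 1 (by omega) t ht
  have hβ1 : HasDerivWithinAt β (-iteratedDerivWithin 2 (G n) I t) I t := by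
    rw [hβ]
    simpa [funext fun s => congrFun (iteratedDerivWithin_one (f := G n) (s := I)) s]
      using (hGd n le_rfl 1 (by omega) t ht).fun_neg
  rw [(hβ1.fun_mul hq1).derivWithin (hU t ht), hβ1.derivWithin (hU t ht), hβ,
    iteratedDerivWithin_one]
  ring
end

section
/- Let T > 0 and let q : ℝ → ℝ be three times differentiable on [0,T) with q(t) ≠ 0 for all t ∈ [0,T). Let G : ℝ → ℝ be three times differentiable on [0,T), define γ(t) := −(1/2)·q(t)²·G''(t), let F : ℝ → ℝ be differentiable on [0,T) with F'(t) = γ'(t)/(2·q(t)) for all t ∈ [0,T), and set H := γ − q·F. Then the function H/q is differentiable on [0,T) and (H/q)'(t) = −(1/4)·q(t)·G'''(t) for all t ∈ [0,T). -/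
/-!
On `[0,T)` the quotient simplifies to `H/q = -(1/2) q G'' - F`. The product rule gives
`γ' = -q q' G'' - (1/2) q² G'''`, hence `F' = γ'/(2q) = -(1/2) q' G'' - (1/4) q G'''`. Subtracting
this from `(-(1/2) q G'')' = -(1/2) q' G'' - (1/2) q G'''` cancels the `q' G''` terms and leaves
`-(1/4) q G'''`. Derivatives within `[0,T)` are unique, the interval being convex with interior.
-/

open Set

/-- the recursion step `(H/q)' = -(1/4) q G'''` for
`H = γ - q ∫ γ'/(2q)` with `γ = -(1/2) q² G''`. -/
theorem recursion_step
    (T : ℝ) (hT : 0 < T)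
    (q : ℝ → ℝ)
    (hq1 : DifferentiableOn ℝ q (Ico (0:ℝ) T))
    (hq2 : DifferentiableOn ℝ (derivWithin q (Ico (0:ℝ) T)) (Ico (0:ℝ) T))
    (hq3 : DifferentiableOn ℝ
      (derivWithin (derivWithin q (Ico (0:ℝ) T)) (Ico (0:ℝ) T)) (Ico (0:ℝ) T))
    (hq0 : ∀ t ∈ Ico (0:ℝ) T, q t ≠ 0)
    (G : ℝ → ℝ)
    (hG1 : DifferentiableOn ℝ G (Ico (0:ℝ) T))
    (hG2 : DifferentiableOn ℝ (derivWithin G (Ico (0:ℝ) T)) (Ico (0:ℝ) T))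
    (hG3 : DifferentiableOn ℝ
      (derivWithin (derivWithin G (Ico (0:ℝ) T)) (Ico (0:ℝ) T)) (Ico (0:ℝ) T))
    (γ : ℝ → ℝ)
    (hγ : γ = fun t => -(1/2) * q t ^ 2 *
      derivWithin (derivWithin G (Ico (0:ℝ) T)) (Ico (0:ℝ) T) t)
    (F : ℝ → ℝ)
    (hF : DifferentiableOn ℝ F (Ico (0:ℝ) T))
    (hF' : ∀ t ∈ Ico (0:ℝ) T,
      derivWithin F (Ico (0:ℝ) T) t = derivWithin γ (Ico (0:ℝ) T) t / (2 * q t))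
    (H : ℝ → ℝ)
    (hH : H = fun t => γ t - q t * F t) :
    DifferentiableOn ℝ (fun t => H t / q t) (Ico (0:ℝ) T) ∧
    ∀ t ∈ Ico (0:ℝ) T,
      derivWithin (fun s => H s / q s) (Ico (0:ℝ) T) t
        = -(1/4) * q t *
          derivWithin (derivWithin (derivWithin G (Ico (0:ℝ) T)) (Ico (0:ℝ) T))
            (Ico (0:ℝ) T) t := by
  set S := Ico (0:ℝ) T
  set G2 := derivWithin (derivWithin G S) S
  have key : ∀ t ∈ S, HasDerivWithinAt (fun s => H s / q s)
      (-(1/4) * q t * derivWithin G2 S t) S t := by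
    intro t ht
    have hu : UniqueDiffWithinAt ℝ S t := uniqueDiffOn_Ico 0 T t ht
    have hq := (hq1 t ht).hasDerivWithinAt
    have hG := (hG3 t ht).hasDerivWithinAt
    have hγd : HasDerivWithinAt γ (-(1/2) * (2 * q t * derivWithin q S t) * G2 t
        + -(1/2) * q t ^ 2 * derivWithin G2 S t) S t := by
      rw [hγ]
      refine (((hq.pow 2).const_mul (-(1/2))).mul hG).congr_deriv ?_
      simp
    have hFd := (hF t ht).hasDerivWithinAt
    rw [hF' t ht, hγd.derivWithin hu] at hFd
    have heq : ∀ s ∈ S, H s / q s = -(1/2) * q s * G2 s - F s := by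
      intro s hs
      have := hq0 s hs
      simp only [hH, hγ]
      field_simp
    refine HasDerivWithinAt.congr ?_ heq (heq t ht)
    refine (((hq.const_mul (-(1/2))).mul hG).sub hFd).congr_deriv ?_
    have := hq0 t ht
    field_simp
    ring
  exact ⟨fun t ht => (key t ht).differentiableWithinAt,
    fun t ht => (key t ht).derivWithin (uniqueDiffOn_Ico 0 T t ht)⟩
end

section
/- Let T > 0 and let q : ℝ → ℝ be differentiable on [0,T) with q(t) ≠ 0 for all t ∈ [0,T). Let A, B, C, D : ℝ → ℝ be such that A and B are three times differentiable on [0,T), D is three times differentiable on [0,T), C is differentiable on [0,T), (C/q)'(t) = −(1/4)·q(t)·A'''(t) for all t ∈ [0,T), and (B/q)'(t) = −(1/4)·q(t)·D'''(t) for all t ∈ [0,T). Then for all t ∈ [0,T): A(t)·B'''(t) = (d/dt)[A·B'' − A'·B' + A''·B + 4·C·B/q²](t) + C(t)·D'''(t). -/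
/-!
The product rule gives `(A·B'' − A'·B' + A''·B)' = A·B''' + A'''·B`, the mixed terms cancelling.
Since `4·C·B/q² = 4·(C/q)·(B/q)`, the hypotheses on `(C/q)'` and `(B/q)'` show that the last
term has derivative `−A'''·B − C·D'''`. Adding the two leaves `A·B''' − C·D'''`.
-/

open Set

/-- pointwise integration-by-parts identity
`A·B''' = (A·B'' − A'·B' + A''·B + 4·C·B/q²)' + C·D'''` on `[0,T)`,
given `(C/q)' = −(1/4)·q·A'''` and `(B/q)' = −(1/4)·q·D'''`. -/
theorem ibp_identity_second
    (T : ℝ) (hT : 0 < T)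
    (q : ℝ → ℝ)
    (hq : DifferentiableOn ℝ q (Ico (0:ℝ) T))
    (hq0 : ∀ t ∈ Ico (0:ℝ) T, q t ≠ 0)
    (A B C D : ℝ → ℝ)
    (hA1 : DifferentiableOn ℝ A (Ico (0:ℝ) T))
    (hA2 : DifferentiableOn ℝ (derivWithin A (Ico (0:ℝ) T)) (Ico (0:ℝ) T))
    (hA3 : DifferentiableOn ℝ
      (derivWithin (derivWithin A (Ico (0:ℝ) T)) (Ico (0:ℝ) T)) (Ico (0:ℝ) T))
    (hB1 : DifferentiableOn ℝ B (Ico (0:ℝ) T))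
    (hB2 : DifferentiableOn ℝ (derivWithin B (Ico (0:ℝ) T)) (Ico (0:ℝ) T))
    (hB3 : DifferentiableOn ℝ
      (derivWithin (derivWithin B (Ico (0:ℝ) T)) (Ico (0:ℝ) T)) (Ico (0:ℝ) T))
    (hD1 : DifferentiableOn ℝ D (Ico (0:ℝ) T))
    (hD2 : DifferentiableOn ℝ (derivWithin D (Ico (0:ℝ) T)) (Ico (0:ℝ) T))
    (hD3 : DifferentiableOn ℝ
      (derivWithin (derivWithin D (Ico (0:ℝ) T)) (Ico (0:ℝ) T)) (Ico (0:ℝ) T))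
    (hC : DifferentiableOn ℝ C (Ico (0:ℝ) T))
    (hCq : ∀ t ∈ Ico (0:ℝ) T,
      derivWithin (fun s => C s / q s) (Ico (0:ℝ) T) t
        = -(1/4) * q t *
          derivWithin (derivWithin (derivWithin A (Ico (0:ℝ) T)) (Ico (0:ℝ) T))
            (Ico (0:ℝ) T) t)
    (hBq : ∀ t ∈ Ico (0:ℝ) T,
      derivWithin (fun s => B s / q s) (Ico (0:ℝ) T) t
        = -(1/4) * q t *
          derivWithin (derivWithin (derivWithin D (Ico (0:ℝ) T)) (Ico (0:ℝ) T))
            (Ico (0:ℝ) T) t) :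
    ∀ t ∈ Ico (0:ℝ) T,
      A t * derivWithin (derivWithin (derivWithin B (Ico (0:ℝ) T)) (Ico (0:ℝ) T))
          (Ico (0:ℝ) T) t
        = derivWithin (fun s =>
            A s * derivWithin (derivWithin B (Ico (0:ℝ) T)) (Ico (0:ℝ) T) s
            - derivWithin A (Ico (0:ℝ) T) s * derivWithin B (Ico (0:ℝ) T) s
            + derivWithin (derivWithin A (Ico (0:ℝ) T)) (Ico (0:ℝ) T) s * B s
            + 4 * C s * B s / q s ^ 2)
            (Ico (0:ℝ) T) t
          + C t * derivWithin (derivWithin (derivWithin D (Ico (0:ℝ) T)) (Ico (0:ℝ) T))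
              (Ico (0:ℝ) T) t := by
  intro t ht
  have hu : UniqueDiffWithinAt ℝ (Ico (0:ℝ) T) t := uniqueDiffOn_Ico 0 T t ht
  have dA1 := (hA1 t ht).hasDerivWithinAt
  have dA2 := (hA2 t ht).hasDerivWithinAt
  have dA3 := (hA3 t ht).hasDerivWithinAt
  have dB1 := (hB1 t ht).hasDerivWithinAt
  have dB2 := (hB2 t ht).hasDerivWithinAt
  have dB3 := (hB3 t ht).hasDerivWithinAt
  have dCq := ((hC t ht).fun_div (hq t ht) (hq0 t ht)).hasDerivWithinAt
  have dBq := ((hB1 t ht).fun_div (hq t ht) (hq0 t ht)).hasDerivWithinAt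
  rw [hCq t ht] at dCq
  rw [hBq t ht] at dBq
  -- Writing `4CB/q²` as `4(C/q)(B/q)` lets the product rule use the two hypotheses on `C/q`
  -- and `B/q` directly, so that `q'` never appears.
  have key := ((((dA1.fun_mul dB3).fun_sub (dA2.fun_mul dB2)).fun_add
    (dA3.fun_mul dB1)).fun_add ((dCq.fun_mul dBq).const_mul 4)).congr_of_eventuallyEq_of_mem
    (f₁ := fun s =>
            A s * derivWithin (derivWithin B (Ico (0:ℝ) T)) (Ico (0:ℝ) T) s
            - derivWithin A (Ico (0:ℝ) T) s * derivWithin B (Ico (0:ℝ) T) s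
            + derivWithin (derivWithin A (Ico (0:ℝ) T)) (Ico (0:ℝ) T) s * B s
            + 4 * C s * B s / q s ^ 2)
    (Filter.Eventually.of_forall fun s => by ring) ht
  rw [key.derivWithin hu]
  have hqt := hq0 t ht
  field_simp
  ring
end

section
/- Suppose the functions α_i, β_i (0 ≤ i ≤ k−2) and γ_i (0 ≤ i ≤ k−2), all differentiable on [0,T), satisfy the system (S) on [0,T). Let n ≥ 1, ξ ∈ ℝ^n, and let w : ℝ → ℂ be twice differentiable on [0,T) with w''(t) = −(‖ξ‖²/q(t)²)·w(t) for all t ∈ [0,T). Then the map t ↦ 𝓔_k(ξ,t) is differentiable on [0,T) and its derivative equals β_{k−2}'(t)·‖ξ‖²·Re(conj(w(t))·w'(t)) for every t ∈ [0,T). -/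
/-!
With `r = ‖ξ‖`, `A = |w'|²`, `B = |w|²` and `C = Re (conj w · w')`, the equation `w'' = -(r²/q²) w` gives
`A' = -2 (r²/q²) C`, `B' = 2 C` and `C' = A - (r²/q²) B` (`hasDerivWithinAt_energies`).
By the first equation of (S), the `i`-th `α`- and `β`-terms of the form together have derivative
`((α_i' + β_i) A + β_i' C) r^(2k-2i-2)`. By the third one, the `i`-th `γ`-term has derivative
`γ_i' r^(2k-2i-4) A - β_i' r^(2k-2i-2) C`. In the sum, the `A`-parts telescope by the second
equation, and the `C`-parts cancel except for the one with `i = k - 2`.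
-/

open Set

/-- Derivatives of `|w'|²`, `|w|²` and `Re (conj w · w')` along `w'' = c w` with `c` real; here `v`
plays the role of `w'`. -/
lemma hasDerivWithinAt_energies {s : Set ℝ} {t c : ℝ} {w v : ℝ → ℂ}
    (hw : HasDerivWithinAt w (v t) s t) (hv : HasDerivWithinAt v ((c : ℂ) * w t) s t) :
    HasDerivWithinAt (fun x => ‖v x‖ ^ 2) (2 * c * ((starRingEnd ℂ) (w t) * v t).re) s t ∧
    HasDerivWithinAt (fun x => ‖w x‖ ^ 2) (2 * ((starRingEnd ℂ) (w t) * v t).re) s t ∧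
    HasDerivWithinAt (fun x => ((starRingEnd ℂ) (w x) * v x).re)
      (‖v t‖ ^ 2 + c * ‖w t‖ ^ 2) s t := by
  refine ⟨?_, ?_, ?_⟩
  · refine hv.norm_sq.congr_deriv ?_
    simp [Complex.inner]
    ring
  · refine hw.norm_sq.congr_deriv ?_
    simp [Complex.inner]
    ring
  · have h := hw.inner ℝ hv
    simp only [Complex.inner] at h
    simp only [mul_comm ((starRingEnd ℂ) _)]
    refine h.congr_deriv ?_
    simp [Complex.sq_norm, Complex.normSq_apply]
    ring

/-- Summation step: the `a`-parts telescope and the `b`-parts cancel up to the last index. -/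
lemma sum_telescope (N : ℕ) (a g b ρ : ℕ → ℝ) (A C : ℝ) (h0 : a 0 = 0)
    (h : ∀ i < N, a (i + 1) = -g i) :
    ∑ i ∈ Finset.range (N + 1), (a i * A + b i * C) * ρ i
      + ∑ i ∈ Finset.range N, (g i * ρ (i + 1) * A - b i * ρ i * C) = b N * ρ N * C := by
  simp only [add_mul, Finset.sum_add_distrib, Finset.sum_sub_distrib]
  rw [Finset.sum_range_succ' (fun i => a i * A * ρ i),
    Finset.sum_range_succ (fun i => b i * C * ρ i), h0]
  have h1 : ∑ i ∈ Finset.range N, a (i + 1) * A * ρ (i + 1)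
      = -∑ i ∈ Finset.range N, g i * ρ (i + 1) * A := by
    rw [← Finset.sum_neg_distrib]
    refine Finset.sum_congr rfl fun i hi => ?_
    rw [h i (Finset.mem_range.mp hi)]
    ring
  have h2 : ∑ i ∈ Finset.range N, b i * C * ρ i = ∑ i ∈ Finset.range N, b i * ρ i * C :=
    Finset.sum_congr rfl fun i _ => by ring
  rw [h1, h2]
  ring

/-- if `(α_i, β_i, γ_i)` solve the system (S), then along any solution of
the Liouville equation `w'' = −(‖ξ‖²/q²)w` the quadratic form `𝓔_k(ξ,·)` is
differentiable with derivative `β_{k−2}'·‖ξ‖²·Re(w̄·w')`. -/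
theorem quadratic_form_derivative
    (T : ℝ) (hT : 0 < T) (k : ℕ) (hk : 3 ≤ k)
    (q : ℝ → ℝ)
    (hq : DifferentiableOn ℝ q (Ico (0:ℝ) T))
    (hq0 : ∀ t ∈ Ico (0:ℝ) T, q t ≠ 0)
    (α β γ : ℕ → ℝ → ℝ)
    (hαd : ∀ i ≤ k - 2, DifferentiableOn ℝ (α i) (Ico (0:ℝ) T))
    (hβd : ∀ i ≤ k - 2, DifferentiableOn ℝ (β i) (Ico (0:ℝ) T))
    (hγd : ∀ i ≤ k - 2, DifferentiableOn ℝ (γ i) (Ico (0:ℝ) T))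
    (hS1 : ∀ i ≤ k - 2, ∀ t ∈ Ico (0:ℝ) T,
      derivWithin (fun s => α i s / q s ^ 2) (Ico (0:ℝ) T) t = β i t / q t ^ 2)
    (hS2₀ : ∀ t ∈ Ico (0:ℝ) T, derivWithin (α 0) (Ico (0:ℝ) T) t + β 0 t = 0)
    (hS2 : ∀ i, 1 ≤ i → i ≤ k - 2 → ∀ t ∈ Ico (0:ℝ) T,
      derivWithin (α i) (Ico (0:ℝ) T) t + β i t
        = -(derivWithin (γ (i - 1)) (Ico (0:ℝ) T) t))
    (hS3 : ∀ i ≤ k - 2, ∀ t ∈ Ico (0:ℝ) T,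
      derivWithin (β i) (Ico (0:ℝ) T) t = 2 * γ i t / q t ^ 2)
    (n : ℕ) (hn : 1 ≤ n) (ξ : EuclideanSpace ℝ (Fin n))
    (w : ℝ → ℂ)
    (hw : DifferentiableOn ℝ w (Ico (0:ℝ) T))
    (hw2 : ∀ t ∈ Ico (0:ℝ) T,
      HasDerivWithinAt (derivWithin w (Ico (0:ℝ) T))
        (((-(‖ξ‖ ^ 2 / q t ^ 2) : ℝ) : ℂ) * w t) (Ico (0:ℝ) T) t) :
    ∀ t ∈ Ico (0:ℝ) T,
      HasDerivWithinAt (fun s => quadFormE T k q α β γ ξ w s)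
        (derivWithin (β (k - 2)) (Ico (0:ℝ) T) t * ‖ξ‖ ^ 2 *
          ((starRingEnd ℂ) (w t) * derivWithin w (Ico (0:ℝ) T) t).re)
        (Ico (0:ℝ) T) t := by
  intro t ht
  obtain ⟨N, rfl⟩ : ∃ N, k = N + 2 := ⟨k - 2, by omega⟩
  have e1 : N + 2 - 1 = N + 1 := rfl
  simp only [Nat.add_sub_cancel] at *
  obtain ⟨hA, hB, hC⟩ := hasDerivWithinAt_energies (hw t ht).hasDerivWithinAt (hw2 t ht)
  simp only [quadFormE, e1, Nat.add_sub_cancel]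
  set S := Ico (0:ℝ) T
  set v := derivWithin w S
  set r := ‖ξ‖
  set c := ((starRingEnd ℂ) (w t) * v t).re
  have hqt := hq0 t ht
  have key1 : ∀ i ∈ Finset.range (N + 1), HasDerivWithinAt (fun s =>
      α i s * r ^ (2 * (N + 2) - 2 * i - 2) * (‖v s‖ ^ 2 + r ^ 2 * ‖w s‖ ^ 2 / q s ^ 2)
      + β i s * r ^ (2 * (N + 2) - 2 * i - 2) * ((starRingEnd ℂ) (w s) * v s).re)
      (((derivWithin (α i) S t + β i t) * ‖v t‖ ^ 2 + derivWithin (β i) S t * c)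
        * r ^ (2 * (N + 2) - 2 * i - 2)) S t := by
    intro i hi
    have hi' : i ≤ N := by simpa [Nat.lt_succ_iff] using hi
    have ha := (hαd i hi' t ht).hasDerivWithinAt
    have hb := (hβd i hi' t ht).hasDerivWithinAt
    -- `α_i / q²` is kept as one function, so that its derivative is given by (S).
    have haq : HasDerivWithinAt (fun s => α i s / q s ^ 2) (β i t / q t ^ 2) S t := by
      rw [← hS1 i hi' t ht]
      exact ((hαd i hi' t ht).div ((hq t ht).pow 2) (pow_ne_zero 2 hqt)).hasDerivWithinAt
    have h := (((ha.mul hA).add ((haq.mul hB).const_mul (r ^ 2))).add (hb.mul hC)).mul_const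
      (r ^ (2 * (N + 2) - 2 * i - 2))
    refine (h.congr_deriv ?_).congr_of_eventuallyEq (Filter.Eventually.of_forall fun x => ?_) ?_
    · field_simp
      ring
    · simp only [Pi.add_apply, Pi.mul_apply]
      ring
    · simp only [Pi.add_apply, Pi.mul_apply]
      ring
  have key2 : ∀ i ∈ Finset.range N, HasDerivWithinAt (fun s =>
      γ i s * r ^ (2 * (N + 2) - 2 * i - 4) * ‖v s‖ ^ 2)
      (derivWithin (γ i) S t * r ^ (2 * (N + 2) - 2 * (i + 1) - 2) * ‖v t‖ ^ 2
        - derivWithin (β i) S t * r ^ (2 * (N + 2) - 2 * i - 2) * c) S t := by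
    intro i hi
    have hi' : i < N := Finset.mem_range.mp hi
    have hg := (hγd i hi'.le t ht).hasDerivWithinAt
    refine ((hg.mul_const (r ^ (2 * (N + 2) - 2 * i - 4))).mul hA).congr_deriv ?_
    have p1 : 2 * (N + 2) - 2 * (i + 1) - 2 = 2 * (N + 2) - 2 * i - 4 := by omega
    have p2 : 2 * (N + 2) - 2 * i - 2 = (2 * (N + 2) - 2 * i - 4) + 2 := by omega
    rw [p1, p2, hS3 i hi'.le t ht, pow_add]
    ring
  have h := (HasDerivWithinAt.fun_sum key1).add (HasDerivWithinAt.fun_sum key2)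
  have p : 2 * (N + 2) - 2 * N - 2 = 2 := by omega
  have hsum := sum_telescope N (fun i => derivWithin (α i) S t + β i t)
    (fun i => derivWithin (γ i) S t) (fun i => derivWithin (β i) S t)
    (fun i => r ^ (2 * (N + 2) - 2 * i - 2)) (‖v t‖ ^ 2) c (hS2₀ t ht)
    (fun i hi => hS2 (i + 1) (by omega) (by omega) t ht)
  simp only [p] at hsum
  refine (h.congr_deriv hsum).congr_of_eventuallyEq
    (Filter.Eventually.of_forall fun x => ?_) ?_ <;>
  simp only [Pi.add_apply, Finset.sum_add_distrib]
end
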